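/- Theorem 1.3, complex case (classification of 3-reflective complex analytic planar projective billiards). Every 3-reflective triple of complex analytic line-framed curves in ℂ² is right-spherical: if (a₁,v₁), (a₂,v₂), (a₃,v₃) is a 3-reflective triple, then there exist linearly independent vectors p, q, r ∈ ℂ³ such that for every s ∈ U₁, (a₁(s),1) ∈ span{p,q} and r ∈ span{(a₁(s),1),(v₁(s),0)}; for every u ∈ U₂, (a₂(u),1) ∈ span{q,r} and p ∈ span{(a₂(u),1),(v₂(u),0)}; and for every t ∈ U₃, (a₃(t),1) ∈ span{r,p} and q ∈ span{(a₃(t),1),(v₃(t),0)} (i.e., in the projective plane the three boundary curves lie on the three sides of the triangle with vertices [p], [q], [r], and each field line passes through the opposite vertex). -/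

import Mathlib

/-- Two nonzero vectors `u`, `w` of the plane are symmetric with respect to the pair
`(v, τ)` (field direction, tangent direction): there are nonzero scalars `p`, `q` with
`p • u + q • w` on the line spanned by `τ` and `p • u - q • w` on the line spanned by `v`. -/
def PlaneSym (𝕜 : Type*) [Field 𝕜] (v τ u w : 𝕜 × 𝕜) : Prop :=
  ∃ p q : 𝕜, p ≠ 0 ∧ q ≠ 0 ∧ p • u + q • w ∈ Submodule.span 𝕜 {τ} ∧
    p • u - q • w ∈ Submodule.span 𝕜 {v}

/-- Lift of a point of the plane to homogeneous coordinates: `x ↦ (x, 1)`. -/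
def liftPt (𝕜 : Type*) [Field 𝕜] (x : 𝕜 × 𝕜) : 𝕜 × 𝕜 × 𝕜 := (x.1, x.2, 1)

/-- Lift of a direction of the plane to homogeneous coordinates: `x ↦ (x, 0)`. -/
def liftDir (𝕜 : Type*) [Field 𝕜] (x : 𝕜 × 𝕜) : 𝕜 × 𝕜 × 𝕜 := (x.1, x.2, 0)



/-- pointwise algebra: the three linear relations force the values of the `K`s. -/
lemma alg_K (a b c d e f p q r KA KB KC : ℂ) (ha : a ≠ 0) (hb : b ≠ 0) (hc : c ≠ 0) (hd : d ≠ 0)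
    (he : e ≠ 0) (hf : f ≠ 0) (hr : a * c * e = - r * (b * d * f)) (hr3 : r ^ 3 = 1)
    (hp : p * (e * c ^ 2) = b * d ^ 2) (hq : q * (f * b ^ 2) = c * a ^ 2)
    (E1s : KA + p * KC + (a * e / f - b * d / c) + p * (e * c / d - f * b / a) = 0)
    (E1u : KB + q * KC + (c * a / b - d * f / e) + q * (e * c / d - f * b / a) = 0)
    (E2 : q * KA + p * KB - p * q * KC = 0) :
    3 * KA = (1 + r) * (3 - r ^ 2 * (1 + r + r ^ 2)) * (b * d / c) ∧
    3 * KB = (1 + r) * (3 - r * (1 + r + r ^ 2)) * (d * f / e) ∧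
    3 * KC = (1 + r) * (3 - (1 + r + r ^ 2)) * (f * b / a) ∧
    q * (f * b / a) = - r * (d * f / e) := by
  have hr0 : r ≠ 0 := by rintro rfl; norm_num at hr3
  obtain ⟨X, hX⟩ : ∃ X, X = b * d / c := ⟨_, rfl⟩
  obtain ⟨Y, hY⟩ : ∃ Y, Y = d * f / e := ⟨_, rfl⟩
  obtain ⟨Z, hZ⟩ : ∃ Z, Z = f * b / a := ⟨_, rfl⟩
  have hX0 : X ≠ 0 := by rw [hX]; positivity
  have hY0 : Y ≠ 0 := by rw [hY]; positivity
  have hZ0 : Z ≠ 0 := by rw [hZ]; positivity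
  have h1 : a * e / f = - r * X := by
    rw [hX]; field_simp; linear_combination hr
  have h2 : c * a / b = - r * Y := by
    rw [hY]; field_simp; linear_combination hr
  have h3 : e * c / d = - r * Z := by
    rw [hZ]; field_simp; linear_combination hr
  have hpZ : p * Z = - r ^ 2 * X := by
    have h5 : p * f * c = - (a * r ^ 2 * d) := by
      have h6 : p * f * c * (b * e * c) = - (a * r ^ 2 * d) * (b * e * c) := by
        linear_combination (f * b) * hp + r ^ 2 * b * d * hr - b ^ 2 * d ^ 2 * f * hr3
      exact mul_right_cancel₀ (by positivity) h6
    rw [hX, hZ]; field_simp; linear_combination h5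
  have hqZ : q * Z = - r * Y := by
    have h4 : q * Z * (f * b ^ 2) = - r * Y * (f * b ^ 2) := by
      rw [hY, hZ]; field_simp
      grind
    exact mul_right_cancel₀ (by positivity) h4
  rw [h1, h3, ← hX, ← hZ] at E1s
  rw [h2, h3, ← hY, ← hZ] at E1u
  rw [← hX, ← hY, ← hZ]
  -- μ
  obtain ⟨m, hm⟩ : ∃ m, m = KC / Z - (1 + r) := ⟨_, rfl⟩
  have hKC : KC = (1 + r + m) * Z := by rw [hm]; field_simp; ring
  have hKA : KA = (1 + r + r ^ 2 * m) * X := by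
    rw [hKC] at E1s
    linear_combination E1s - m * hpZ
  have hKB : KB = (1 + r + r * m) * Y := by
    rw [hKC] at E1u
    linear_combination E1u - m * hqZ
  have hm3 : 3 * m = - (1 + r) * (1 + r + r ^ 2) := by
    have h5 : (X * Y) * (3 * m + (1 + r) * (1 + r + r ^ 2)) = 0 := by
      rw [hKA, hKB, hKC] at E2
      have : Z * (q * ((1 + r + r ^ 2 * m) * X) + p * ((1 + r + r * m) * Y) - p * q * ((1 + r + m) * Z)) = 0 := by
        rw [E2]; ring
      have h6 : p * Z * (q * Z) = r ^ 3 * (X * Y) := by rw [hpZ, hqZ]; ring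
      linear_combination (-1) * this + (1 + r + r ^ 2 * m) * X * hqZ + (1 + r + r * m) * Y * hpZ
        - (1 + r + m) * h6 - (X * Y) * (3 * m + 1 + r) * hr3
    have := (mul_eq_zero.mp h5).resolve_left (by positivity)
    linear_combination this
  refine ⟨?_, ?_, ?_, hqZ⟩
  · rw [hKA]; linear_combination (r ^ 2 * X) * hm3
  · rw [hKB]; linear_combination (r * Y) * hm3
  · rw [hKC]; linear_combination Z * hm3

lemma LD_mul {F G : ℂ × ℂ → ℂ} {F' G' : ℂ} {z w : ℂ × ℂ} (hF : HasLineDerivAt ℂ F F' z w)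
    (hG : HasLineDerivAt ℂ G G' z w) :
    HasLineDerivAt ℂ (fun x => F x * G x) (F' * G z + F z * G') z w := by
  have := HasDerivAt.mul (show HasDerivAt (fun t : ℂ => F (z + t • w)) F' 0 from hF)
    (show HasDerivAt (fun t : ℂ => G (z + t • w)) G' 0 from hG)
  simp only [zero_smul, add_zero] at this
  exact this

lemma LD_add {F G : ℂ × ℂ → ℂ} {F' G' : ℂ} {z w : ℂ × ℂ} (hF : HasLineDerivAt ℂ F F' z w)
    (hG : HasLineDerivAt ℂ G G' z w) :
    HasLineDerivAt ℂ (fun x => F x + G x) (F' + G') z w := by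
  exact HasDerivAt.add (show HasDerivAt (fun t : ℂ => F (z + t • w)) F' 0 from hF)
    (show HasDerivAt (fun t : ℂ => G (z + t • w)) G' 0 from hG)

lemma line_tendsto (z w : ℂ × ℂ) : Filter.Tendsto (fun t : ℂ => z + t • w) (nhds 0) (nhds z) := by
  have : Continuous (fun t : ℂ => z + t • w) := by fun_prop
  simpa using this.tendsto 0

lemma LD_unique {F G : ℂ × ℂ → ℂ} {F' G' : ℂ} {z w : ℂ × ℂ}
    (h : ∀ᶠ t in nhds (0 : ℂ), F (z + t • w) = G (z + t • w))
    (hF : HasLineDerivAt ℂ F F' z w) (hG : HasLineDerivAt ℂ G G' z w) : F' = G' := by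
  have h1 : HasDerivAt (fun t : ℂ => F (z + t • w)) F' 0 := hF
  have h2 : HasDerivAt (fun t : ℂ => G (z + t • w)) G' 0 := hG
  exact h1.unique (h2.congr_of_eventuallyEq h)

/-- The differential system satisfied by the coefficients has only the flat solution. -/
theorem sys_flat (Ω : Set (ℂ × ℂ)) (hΩ : IsOpen Ω)
    (a b c d e f D W p q a1 a2 b1 b2 c1 c2 : ℂ × ℂ → ℂ)
    (ha : ∀ z ∈ Ω, a z ≠ 0) (hb : ∀ z ∈ Ω, b z ≠ 0) (hc : ∀ z ∈ Ω, c z ≠ 0)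
    (hd : ∀ z ∈ Ω, d z ≠ 0) (he : ∀ z ∈ Ω, e z ≠ 0) (hf : ∀ z ∈ Ω, f z ≠ 0)
    (hD : ∀ z ∈ Ω, D z ≠ 0)
    (da : ∀ z ∈ Ω, ∀ i j k, k = i * p z + j * q z → HasLineDerivAt ℂ a
      (i * a1 z + a z * j * (c z + d z) - b z * k * f z + (a z + b z) * i * a z) z (i, j))
    (db : ∀ z ∈ Ω, ∀ i j k, k = i * p z + j * q z → HasLineDerivAt ℂ b
      (i * a2 z - a z * j * c z + b z * k * (e z + f z) + (a z + b z) * i * b z) z (i, j))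
    (dc : ∀ z ∈ Ω, ∀ i j k, k = i * p z + j * q z → HasLineDerivAt ℂ c
      (j * b1 z + c z * k * (e z + f z) - d z * i * b z + (c z + d z) * j * c z) z (i, j))
    (dd : ∀ z ∈ Ω, ∀ i j k, k = i * p z + j * q z → HasLineDerivAt ℂ d
      (j * b2 z - c z * k * e z + d z * i * (a z + b z) + (c z + d z) * j * d z) z (i, j))
    (de : ∀ z ∈ Ω, ∀ i j k, k = i * p z + j * q z → HasLineDerivAt ℂ e
      (k * c1 z + e z * i * (a z + b z) - f z * j * d z + (e z + f z) * k * e z) z (i, j))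
    (df : ∀ z ∈ Ω, ∀ i j k, k = i * p z + j * q z → HasLineDerivAt ℂ f
      (k * c2 z - e z * i * a z + f z * j * (c z + d z) + (e z + f z) * k * f z) z (i, j))
    (dD : ∀ z ∈ Ω, HasLineDerivAt ℂ D (-(c z + d z) * D z - q z * (e z + f z) * D z) z (0, 1))
    (hW : ∀ z ∈ Ω, W z = (a z * a2 z - b z * a1 z) * D z)
    (dW : ∀ z ∈ Ω, HasLineDerivAt ℂ W 0 z (0, 1))
    (hp : ∀ z ∈ Ω, p z * (e z * c z ^ 2) = b z * d z ^ 2)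
    (hq : ∀ z ∈ Ω, q z * (f z * b z ^ 2) = c z * a z ^ 2)
    (hpq : ∀ z ∈ Ω, q z * (a z * e z ^ 2) = - p z * (d z * f z ^ 2))
    (hsym : ∀ z ∈ Ω, ∃ l, HasLineDerivAt ℂ p l z (0, 1) ∧ HasLineDerivAt ℂ q l z (1, 0)) :
    ∀ z ∈ Ω, a z * c z * e z = - (b z * d z * f z) ∧ a z * a2 z = b z * a1 z ∧
      c z * b2 z = d z * b1 z ∧ e z * c2 z = f z * c1 z := by
  have hcube : ∀ z ∈ Ω, (a z * c z * e z) ^ 3 = - (b z * d z * f z) ^ 3 := by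
    intro z hz
    have h1 := hp z hz; have h2 := hq z hz; have h3 := hpq z hz
    have := ha z hz; have := hb z hz; have := hc z hz
    have := hd z hz; have := he z hz; have := hf z hz
    have hP : p z = b z * d z ^ 2 / (e z * c z ^ 2) := by rw [eq_div_iff (by positivity)]; exact h1
    have hQ : q z = c z * a z ^ 2 / (f z * b z ^ 2) := by rw [eq_div_iff (by positivity)]; exact h2
    rw [hP, hQ] at h3
    field_simp at h3
    linear_combination h3
  have hev : ∀ z ∈ Ω, ∀ w, ∀ᶠ t in nhds (0 : ℂ), z + t • w ∈ Ω := fun z hz w =>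
    (line_tendsto z w).eventually (hΩ.mem_nhds hz)
  -- pointwise consequences
  have key : ∀ z ∈ Ω, ∃ r : ℂ, a z * c z * e z = - r * (b z * d z * f z) ∧ r ^ 3 = 1 ∧
      3 * (a1 z / a z - a2 z / b z) =
        (1 + r) * (3 - r ^ 2 * (1 + r + r ^ 2)) * (b z * d z / c z) ∧
      3 * (b1 z / c z - b2 z / d z) =
        (1 + r) * (3 - r * (1 + r + r ^ 2)) * (d z * f z / e z) ∧
      3 * (c1 z / e z - c2 z / f z) =
        (1 + r) * (3 - (1 + r + r ^ 2)) * (f z * b z / a z) ∧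
      q z * (f z * b z / a z) = - r * (d z * f z / e z) := by
    intro z hz
    have na := ha z hz; have nb := hb z hz; have nc := hc z hz
    have nd := hd z hz; have ne := he z hz; have nf := hf z hz
    have E1 : ∀ i j k, k = i * p z + j * q z →
        i * (a1 z / a z - a2 z / b z) + j * (b1 z / c z - b2 z / d z)
          + k * (c1 z / e z - c2 z / f z)
          + i * (a z * e z / f z - b z * d z / c z) + j * (c z * a z / b z - d z * f z / e z)
          + k * (e z * c z / d z - f z * b z / a z) = 0 := by
      intro i j k hk
      have hS := LD_mul (LD_mul (da z hz i j k hk) (dc z hz i j k hk)) (de z hz i j k hk)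
      have hT := LD_mul (LD_mul (db z hz i j k hk) (dd z hz i j k hk)) (df z hz i j k hk)
      have hS3 := LD_mul (LD_mul hS hS) hS
      have hT3 := LD_mul (LD_mul hT hT) hT
      have hsum := LD_add hS3 hT3
      have h0 : HasLineDerivAt ℂ (fun _ : ℂ × ℂ => (0 : ℂ)) 0 z (i, j) :=
        hasDerivAt_const _ _
      have hu := LD_unique ((hev z hz (i, j)).mono fun t ht => by
        have := hcube _ ht
        show _ = (0 : ℂ)
        linear_combination this) hsum h0
      have h3 := hcube z hz
      obtain ⟨S, hSd⟩ : ∃ S, S = a z * c z * e z := ⟨_, rfl⟩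
      obtain ⟨T, hTd⟩ : ∃ T, T = b z * d z * f z := ⟨_, rfl⟩
      generalize hS' : ((i * a1 z + a z * j * (c z + d z) - b z * k * f z
        + (a z + b z) * i * a z) * c z + a z * (j * b1 z + c z * k * (e z + f z)
        - d z * i * b z + (c z + d z) * j * c z)) * e z + a z * c z * (k * c1 z
        + e z * i * (a z + b z) - f z * j * d z + (e z + f z) * k * e z) = S' at hu
      generalize hT' : ((i * a2 z - a z * j * c z + b z * k * (e z + f z)
        + (a z + b z) * i * b z) * d z + b z * (j * b2 z - c z * k * e z
        + d z * i * (a z + b z) + (c z + d z) * j * d z)) * f z + b z * d z * (k * c2 z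
        - e z * i * a z + f z * j * (c z + d z) + (e z + f z) * k * f z) = T' at hu
      rw [← hSd, ← hTd] at hu h3
      have hT0 : T ≠ 0 := by rw [hTd]; positivity
      have hS0 : S ≠ 0 := by rw [hSd]; positivity
      have hST : T ^ 3 * (S' * T - S * T') = 0 := by
        linear_combination (-(S * T) / 3) * hu + (S' * T) * h3
      have hST' := (mul_eq_zero.mp hST).resolve_left (by positivity)
      have : S' / S - T' / T = 0 := by
        field_simp; linear_combination hST'
      rw [← this, ← hS', ← hT', hSd, hTd]
      field_simp
      ring
    have E1s := E1 1 0 (p z) (by ring)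
    have E1u := E1 0 1 (q z) (by ring)
    obtain ⟨l, hl1, hl2⟩ := hsym z hz
    have L1 : l = p z * (((0:ℂ) * a2 z - a z * 1 * c z + b z * q z * (e z + f z)
          + (a z + b z) * 0 * b z) / b z
        + 2 * ((1 * b2 z - c z * q z * e z + d z * 0 * (a z + b z)
          + (c z + d z) * 1 * d z) / d z)
        - (q z * c1 z + e z * 0 * (a z + b z) - f z * 1 * d z + (e z + f z) * q z * e z) / e z
        - 2 * ((1 * b1 z + c z * q z * (e z + f z) - d z * 0 * b z
          + (c z + d z) * 1 * c z) / c z)) := by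
      have hk : q z = 0 * p z + 1 * q z := by ring
      have h1 := LD_mul hl1 (LD_mul (de z hz 0 1 _ hk) (LD_mul (dc z hz 0 1 _ hk) (dc z hz 0 1 _ hk)))
      have h2 := LD_mul (db z hz 0 1 _ hk) (LD_mul (dd z hz 0 1 _ hk) (dd z hz 0 1 _ hk))
      have hu := LD_unique ((hev z hz (0, 1)).mono fun t ht => by
        have := hp _ ht
        linear_combination this) h1 h2
      have hpz := hp z hz
      generalize (0:ℂ) * a2 z - a z * 1 * c z + b z * q z * (e z + f z)
          + (a z + b z) * 0 * b z = b' at *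
      generalize 1 * b2 z - c z * q z * e z + d z * 0 * (a z + b z)
          + (c z + d z) * 1 * d z = d' at *
      generalize q z * c1 z + e z * 0 * (a z + b z) - f z * 1 * d z + (e z + f z) * q z * e z = e' at *
      generalize 1 * b1 z + c z * q z * (e z + f z) - d z * 0 * b z
          + (c z + d z) * 1 * c z = c' at *
      have : l * (e z * c z ^ 2) = p z * (e z * c z ^ 2) * (b' / b z + 2 * (d' / d z)
        - e' / e z - 2 * (c' / c z)) := by
        have h5 : p z * (e z * c z ^ 2) * (b' / b z + 2 * (d' / d z)) =
          b' * d z ^ 2 + 2 * b z * d z * d' := by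
          rw [hpz]; field_simp
        have h6 : p z * (e z * c z ^ 2) * (e' / e z + 2 * (c' / c z)) =
          p z * (e' * c z ^ 2 + 2 * e z * c z * c') := by
          field_simp
        linear_combination hu - h5 + h6
      refine mul_right_cancel₀ (b := e z * c z ^ 2) (by positivity) ?_
      rw [this]; ring
    have L2 : l = q z * (((0:ℂ) * b1 z + c z * p z * (e z + f z) - d z * 1 * b z
          + (c z + d z) * 0 * c z) / c z
        + 2 * ((1 * a1 z + a z * 0 * (c z + d z) - b z * p z * f z
          + (a z + b z) * 1 * a z) / a z)
        - (p z * c2 z - e z * 1 * a z + f z * 0 * (c z + d z) + (e z + f z) * p z * f z) / f z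
        - 2 * ((1 * a2 z - a z * 0 * c z + b z * p z * (e z + f z)
          + (a z + b z) * 1 * b z) / b z)) := by
      have hk : p z = 1 * p z + 0 * q z := by ring
      have h1 := LD_mul hl2 (LD_mul (df z hz 1 0 _ hk) (LD_mul (db z hz 1 0 _ hk) (db z hz 1 0 _ hk)))
      have h2 := LD_mul (dc z hz 1 0 _ hk) (LD_mul (da z hz 1 0 _ hk) (da z hz 1 0 _ hk))
      have hu := LD_unique ((hev z hz (1, 0)).mono fun t ht => by
        have := hq _ ht
        linear_combination this) h1 h2
      have hqz := hq z hz
      generalize (0:ℂ) * b1 z + c z * p z * (e z + f z) - d z * 1 * b z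
          + (c z + d z) * 0 * c z = c' at *
      generalize 1 * a1 z + a z * 0 * (c z + d z) - b z * p z * f z
          + (a z + b z) * 1 * a z = a' at *
      generalize p z * c2 z - e z * 1 * a z + f z * 0 * (c z + d z) + (e z + f z) * p z * f z = f' at *
      generalize 1 * a2 z - a z * 0 * c z + b z * p z * (e z + f z)
          + (a z + b z) * 1 * b z = b' at *
      have : l * (f z * b z ^ 2) = q z * (f z * b z ^ 2) * (c' / c z + 2 * (a' / a z)
        - f' / f z - 2 * (b' / b z)) := by
        have h5 : q z * (f z * b z ^ 2) * (c' / c z + 2 * (a' / a z)) =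
          c' * a z ^ 2 + 2 * c z * a z * a' := by
          rw [hqz]; field_simp
        have h6 : q z * (f z * b z ^ 2) * (f' / f z + 2 * (b' / b z)) =
          q z * (f' * b z ^ 2 + 2 * f z * b z * b') := by
          field_simp
        linear_combination hu - h5 + h6
      refine mul_right_cancel₀ (b := f z * b z ^ 2) (by positivity) ?_
      rw [this]; ring
    have E2' : 2 * q z * (a1 z / a z - a2 z / b z) + 2 * p z * (b1 z / c z - b2 z / d z)
        + p z * q z * (c1 z / e z - c2 z / f z) + q z * (a z * e z / f z - b z * d z / c z)
        + p z * (c z * a z / b z - d z * f z / e z)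
        + 2 * p z * q z * (e z * c z / d z - f z * b z / a z) = 0 := by
      rw [L1] at L2
      have := sub_eq_zero.mpr L2.symm
      rw [← this]
      field_simp
      ring
    obtain ⟨r, hr⟩ : ∃ r, r = - (a z * c z * e z) / (b z * d z * f z) := ⟨_, rfl⟩
    have hr1 : a z * c z * e z = - r * (b z * d z * f z) := by
      rw [hr]; field_simp
    have hr3 : r ^ 3 = 1 := by
      rw [hr, div_pow, div_eq_one_iff_eq (by positivity)]
      linear_combination -(hcube z hz)
    refine ⟨r, hr1, hr3, ?_⟩
    exact alg_K _ _ _ _ _ _ (p z) (q z) r _ _ _ na nb nc nd ne nf hr1 hr3 (hp z hz) (hq z hz)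
      (by linear_combination E1s) (by linear_combination E1u)
      (by linear_combination E2' - q z * E1s - p z * E1u)
  intro z hz
  have na := ha z hz; have nb := hb z hz; have nc := hc z hz
  have nd := hd z hz; have ne := he z hz; have nf := hf z hz
  obtain ⟨r, hr, hr3, hA, hB, hC, hqZ⟩ := key z hz
  by_cases h1 : r = 1
  · subst h1
    norm_num at hA hB hC
    refine ⟨by linear_combination hr, ?_, ?_, ?_⟩
    · field_simp at hA; linear_combination -hA
    · field_simp at hB; linear_combination -hB
    · field_simp at hC; linear_combination -hC
  exfalso
  -- nontrivial cube root of unity: contradiction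
  have hk : q z = 0 * p z + 1 * q z := by ring
  have dA := da z hz 0 1 _ hk
  have dB := db z hz 0 1 _ hk
  have dC := dc z hz 0 1 _ hk
  have dDD := dd z hz 0 1 _ hk
  have dE := de z hz 0 1 _ hk
  have dF := df z hz 0 1 _ hk
  have hST := LD_add (LD_mul (LD_mul dA dC) dE) (LD_mul (LD_mul dB dDD) dF)
  have hne : ∀ᶠ t in nhds (0 : ℂ), (fun x => a x * c x * e x + b x * d x * f x)
      (z + t • ((0, 1) : ℂ × ℂ)) ≠ 0 := by
    have hc := (show HasDerivAt _ _ _ from hST).continuousAt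
    refine hc.eventually_ne ?_
    simp only [zero_smul, add_zero]
    rw [hr]
    have : (1 - r) * (b z * d z * f z) ≠ 0 := mul_ne_zero (sub_ne_zero.mpr (Ne.symm h1)) (by positivity)
    intro h; apply this; linear_combination h
  have cub : ∀ r : ℂ, r ^ 3 = 1 → r ≠ 1 → 1 + r + r ^ 2 = 0 := by
    intro r h3 h1
    have : (r - 1) * (1 + r + r ^ 2) = 0 := by linear_combination h3
    exact (mul_eq_zero.mp this).resolve_left (sub_ne_zero.mpr h1)
  have hWf : ∀ x ∈ Ω, a x * c x * e x + b x * d x * f x ≠ 0 →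
      W x * (c x * c x * e x) = - (b x * b x * b x * (d x * d x) * f x * D x) := by
    intro x hx hn
    have na := ha x hx; have nb := hb x hx; have nc := hc x hx
    have nd := hd x hx; have ne := he x hx; have nf := hf x hx
    obtain ⟨r, hr, hr3, hA, -, -, -⟩ := key x hx
    have hr1 : r ≠ 1 := by
      rintro rfl; apply hn; linear_combination hr
    have hc := cub r hr3 hr1
    rw [hc] at hA
    have hA' : a1 x * b x - a2 x * a x = (1 + r) * (b x * d x / c x) * (a x * b x) := by
      have : a1 x / a x - a2 x / b x = (1 + r) * (b x * d x / c x) := by linear_combination hA / 3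
      rw [← this]; field_simp
    have hA'' : (a1 x * b x - a2 x * a x) * c x = (1 + r) * (b x * d x) * (a x * b x) := by
      rw [hA']; field_simp
    rw [hW x hx]
    have h5 : (1 + r) * (a x * c x * e x) = b x * d x * f x := by
      linear_combination (1 + r) * hr - b x * d x * f x * hc
    linear_combination (-c x * e x * D x) * hA'' - (b x ^ 2 * d x * D x) * h5
  have hL := LD_mul (dW z hz) (LD_mul (LD_mul dC dC) dE)
  have hR := LD_mul (LD_mul (LD_mul (LD_mul (LD_mul dB dB) dB) (LD_mul dDD dDD)) dF) (dD z hz)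
  have hLR := LD_add hL hR
  have h0 : HasLineDerivAt ℂ (fun _ : ℂ × ℂ => (0 : ℂ)) 0 z (0, 1) :=
        hasDerivAt_const _ _
  have hu := LD_unique ((hne.and (hev z hz (0, 1))).mono fun t ht => by
        have := hWf _ ht.2 ht.1
        show _ = (0 : ℂ)
        linear_combination this) hLR h0
  have hwz := hWf z hz (by simpa using hne.self_of_nhds)
  have nD := hD z hz
  have hc3 := cub r hr3 h1
  rw [hc3] at hB hC
  -- logarithmic derivative
  have hlog : -3 * (a z * c z / b z) - 2 * (b1 z / c z - b2 z / d z)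
      - 2 * q z * (e z * c z / d z) - q z * (c1 z / e z - c2 z / f z) + d z * f z / e z = 0 := by
    suffices hm : (b z * b z * b z * (d z * d z) * f z * D z) *
      (-3 * (a z * c z / b z) - 2 * (b1 z / c z - b2 z / d z)
      - 2 * q z * (e z * c z / d z) - q z * (c1 z / e z - c2 z / f z) + d z * f z / e z) = 0 from
      (mul_eq_zero.mp hm).resolve_left (by positivity)
    have hWz : W z = - (b z * b z * b z * (d z * d z) * f z * D z) / (c z * c z * e z) := by
      rw [eq_div_iff (by positivity)]; exact hwz
    rw [hWz] at hu
    rw [← hu]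
    field_simp
    ring
  have h2 : a z * c z / b z = - r * (d z * f z / e z) := by
    field_simp; linear_combination hr
  have h3 : e z * c z / d z = - r * (f z * b z / a z) := by
    field_simp; linear_combination hr
  have hY : d z * f z / e z ≠ 0 := by positivity
  have hr0 : r ≠ 0 := by rintro rfl; norm_num at hr3
  rw [h2, h3] at hlog
  generalize d z * f z / e z = Y at *
  generalize f z * b z / a z = Z at *
  have hB' : b1 z / c z - b2 z / d z = (1 + r) * Y := by linear_combination hB / 3
  have hC' : c1 z / e z - c2 z / f z = (1 + r) * Z := by linear_combination hC / 3
  rw [hB', hC'] at hlog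
  have : 3 * r * Y = 0 := by
    linear_combination hlog + (-2 * r + (1 + r)) * hqZ + Y * hc3 * 1 - 0 * hc3
  exact (mul_ne_zero (mul_ne_zero three_ne_zero hr0) hY) this

/-- Planar cross product. -/
def cr (x y : ℂ × ℂ) : ℂ := x.1 * y.2 - x.2 * y.1

lemma hda_fst {f : ℂ → ℂ × ℂ} {f' : ℂ × ℂ} {x : ℂ} (h : HasDerivAt f f' x) :
    HasDerivAt (fun t => (f t).1) f'.1 x :=
  (ContinuousLinearMap.fst ℂ ℂ ℂ).hasFDerivAt.comp_hasDerivAt x h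

lemma hda_snd {f : ℂ → ℂ × ℂ} {f' : ℂ × ℂ} {x : ℂ} (h : HasDerivAt f f' x) :
    HasDerivAt (fun t => (f t).2) f'.2 x :=
  (ContinuousLinearMap.snd ℂ ℂ ℂ).hasFDerivAt.comp_hasDerivAt x h

lemma hda_cr {f g : ℂ → ℂ × ℂ} {f' g' : ℂ × ℂ} {x : ℂ} (hf : HasDerivAt f f' x)
    (hg : HasDerivAt g g' x) :
    HasDerivAt (fun t => cr (f t) (g t)) (cr f' (g x) + cr (f x) g') x := by
  have := ((hda_fst hf).mul (hda_snd hg)).sub ((hda_snd hf).mul (hda_fst hg))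
  refine this.congr_deriv ?_
  simp only [cr]; ring

lemma vertex (X Y Z X1 : ℂ → ℂ × ℂ) (i j k α β γ δ ε ζ κ₁ κ₂ : ℂ) (y1 z1 x2 : ℂ × ℂ)
    (hX : HasDerivAt X (i • X1 0) 0) (hY : HasDerivAt Y (j • y1) 0)
    (hZ : HasDerivAt Z (k • z1) 0) (hX1 : HasDerivAt X1 (i • x2) 0)
    (e1 : X1 0 = α • (Y 0 - X 0) + β • (Z 0 - X 0))
    (e2 : y1 = γ • (Z 0 - Y 0) + δ • (X 0 - Y 0))
    (e3 : z1 = ε • (X 0 - Z 0) + ζ • (Y 0 - Z 0))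
    (e4 : x2 = κ₁ • (Y 0 - X 0) + κ₂ • (Z 0 - X 0))
    (hD : cr (Y 0 - X 0) (Z 0 - X 0) ≠ 0) :
    HasDerivAt (fun t => cr (X1 t) (Z t - X t) / cr (Y t - X t) (Z t - X t))
      (i * κ₁ + α * j * (γ + δ) - β * k * ζ + (α + β) * i * α) 0 ∧
    HasDerivAt (fun t => cr (Y t - X t) (X1 t) / cr (Y t - X t) (Z t - X t))
      (i * κ₂ - α * j * γ + β * k * (ε + ζ) + (α + β) * i * β) 0 ∧
    HasDerivAt (fun t => cr (Y t - X t) (Z t - X t))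
      (-(i * (α + β) + j * (γ + δ) + k * (ε + ζ)) * cr (Y 0 - X 0) (Z 0 - X 0)) 0 := by
  have h1 := hda_cr hX1 (hZ.sub hX)
  have h2 := hda_cr (hY.sub hX) (hZ.sub hX)
  have h3 := hda_cr (hY.sub hX) hX1
  have hD' := hD
  refine ⟨(h1.div h2 hD).congr_deriv ?_, (h3.div h2 hD).congr_deriv ?_, h2.congr_deriv ?_⟩
  · simp only [Pi.sub_apply]
    rw [div_eq_iff (pow_ne_zero 2 hD)]
    simp only [e1, e2, e3, e4, cr, Prod.fst_add, Prod.snd_add, Prod.fst_sub, Prod.snd_sub,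
      Prod.smul_fst, Prod.smul_snd, smul_eq_mul]
    ring
  · simp only [Pi.sub_apply]
    rw [div_eq_iff (pow_ne_zero 2 hD)]
    simp only [e1, e2, e3, e4, cr, Prod.fst_add, Prod.snd_add, Prod.fst_sub, Prod.snd_sub,
      Prod.smul_fst, Prod.smul_snd, smul_eq_mul]
    ring
  · simp only [e1, e2, e3, cr, Prod.fst_add, Prod.snd_add, Prod.fst_sub, Prod.snd_sub,
      Prod.smul_fst, Prod.smul_snd, smul_eq_mul, Pi.sub_apply]
    ring

lemma cr_zero_of (V u w : ℂ × ℂ) (hD : cr u w ≠ 0) (h1 : cr V u = 0) (h2 : cr V w = 0) :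
    V = 0 := by
  simp only [cr] at *
  have e1 : V.1 * (u.1 * w.2 - u.2 * w.1) = 0 := by linear_combination u.1 * h2 - w.1 * h1
  have e2 : V.2 * (u.1 * w.2 - u.2 * w.1) = 0 := by linear_combination u.2 * h2 - w.2 * h1
  exact Prod.ext ((mul_eq_zero.mp e1).resolve_right hD) ((mul_eq_zero.mp e2).resolve_right hD)

/-- The reflection equation. -/
def reflEq (V X1 X Y Z : ℂ × ℂ) : ℂ :=
  cr X1 (Z - X) * cr V (Y - X) + cr X1 (Y - X) * cr V (Z - X)

/-- Along a direction in which the vertex `X` is stationary. -/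
lemma field_rel (X Y Z X1 V : ℂ → ℂ × ℂ) (j k α β γ δ ε ζ : ℂ) (y1 z1 : ℂ × ℂ)
    (hX : HasDerivAt X 0 0) (hY : HasDerivAt Y (j • y1) 0)
    (hZ : HasDerivAt Z (k • z1) 0) (hX1 : HasDerivAt X1 0 0) (hV : HasDerivAt V 0 0)
    (e1 : X1 0 = α • (Y 0 - X 0) + β • (Z 0 - X 0))
    (e2 : y1 = γ • (Z 0 - Y 0) + δ • (X 0 - Y 0))
    (e3 : z1 = ε • (X 0 - Z 0) + ζ • (Y 0 - Z 0))
    (hD : cr (Y 0 - X 0) (Z 0 - X 0) ≠ 0) (hV0 : V 0 ≠ 0) (ha : α ≠ 0) (hb : β ≠ 0)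
    (h0 : ∀ᶠ t in nhds (0 : ℂ), reflEq (V t) (X1 t) (X t) (Y t) (Z t) = 0) :
    j * (γ * α ^ 2) = k * (ζ * β ^ 2) := by
  have h1 := ((hda_cr hX1 (hZ.sub hX)).mul (hda_cr hV (hY.sub hX))).add
    ((hda_cr hX1 (hY.sub hX)).mul (hda_cr hV (hZ.sub hX)))
  have h2 := h1.unique ((hasDerivAt_const (0:ℂ) (0:ℂ)).congr_of_eventuallyEq h0)
  have h3 := h0.self_of_nhds
  have hm : cr (V 0) (Y 0 - X 0) ≠ 0 := by
    intro hm
    apply hV0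
    refine cr_zero_of _ _ _ hD hm ?_
    have : β * cr (Y 0 - X 0) (Z 0 - X 0) * cr (V 0) (Z 0 - X 0) = 0 := by
      have e : cr (X1 0) (Y 0 - X 0) = - β * cr (Y 0 - X 0) (Z 0 - X 0) := by
        rw [e1]; simp only [cr, Prod.fst_add, Prod.snd_add, Prod.fst_sub, Prod.snd_sub,
          Prod.smul_fst, Prod.smul_snd, smul_eq_mul]; ring
      rw [reflEq, hm, e] at h3
      linear_combination -h3
    exact (mul_eq_zero.mp this).resolve_left (mul_ne_zero hb hD)
  obtain ⟨u, hu⟩ : ∃ u, u = Y 0 - X 0 := ⟨_, rfl⟩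
  obtain ⟨w, hw⟩ : ∃ w, w = Z 0 - X 0 := ⟨_, rfl⟩
  have hyx : Z 0 - Y 0 = w - u := by rw [hu, hw]; abel
  have hxy : X 0 - Y 0 = - u := by rw [hu]; abel
  have hxz : X 0 - Z 0 = - w := by rw [hw]; abel
  have hyz : Y 0 - Z 0 = u - w := by rw [hu, hw]; abel
  simp only [reflEq, Pi.sub_apply, e1, e2, e3, hyx, hxy, hxz, hyz] at h2 h3
  rw [← hu] at hD hm h2 h3
  rw [← hw] at hD h2 h3
  obtain ⟨V0, hV0'⟩ : ∃ v, v = V 0 := ⟨_, rfl⟩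
  rw [← hV0'] at hm h2 h3
  simp only [cr, Prod.fst_add, Prod.snd_add, Prod.fst_sub, Prod.snd_sub, Prod.fst_neg,
      Prod.snd_neg, Prod.fst_zero, Prod.snd_zero,
      Prod.smul_fst, Prod.smul_snd, smul_eq_mul] at hD hm h2 h3
  obtain ⟨m, hm'⟩ : ∃ m, m = V0.1 * u.2 - V0.2 * u.1 := ⟨_, rfl⟩
  obtain ⟨n, hn'⟩ : ∃ m, m = V0.1 * w.2 - V0.2 * w.1 := ⟨_, rfl⟩
  obtain ⟨D, hD'⟩ : ∃ m, m = u.1 * w.2 - u.2 * w.1 := ⟨_, rfl⟩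
  have h3' : D * (α * m - β * n) = 0 := by rw [hm', hn', hD']; linear_combination h3
  have h2' : D * ((α * (- k * (ε + ζ)) - β * k * ζ) * m + α * (- j * (γ + δ) * m + j * γ * n)
      + (α * j * γ + β * j * (γ + δ)) * n - β * (- k * (ε + ζ) * n + k * ζ * m)) = 0 := by
    rw [hm', hn', hD']; linear_combination h2
  rw [← hD'] at hD
  rw [← hm'] at hm
  have h3'' := (mul_eq_zero.mp h3').resolve_left hD
  have h2'' := (mul_eq_zero.mp h2').resolve_left hD
  have : (2 * m) * (j * (γ * α ^ 2) - k * (ζ * β ^ 2)) = 0 := by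
    linear_combination β * h2'' + (2 * j * γ * α + β * (k * (ε + ζ)) + β * j * (γ + δ)) * h3''
  exact sub_eq_zero.mp ((mul_eq_zero.mp this).resolve_left (mul_ne_zero two_ne_zero hm))

/-- Nondegeneracy of the reflection equation in the third vertex. -/
lemma refl_deriv_ne (X Y V X1 : ℂ × ℂ) (Z : ℂ → ℂ × ℂ) (t α β ε ζ : ℂ) (z1 : ℂ × ℂ)
    (hZ : HasDerivAt Z z1 t)
    (e1 : X1 = α • (Y - X) + β • (Z t - X))
    (e3 : z1 = ε • (X - Z t) + ζ • (Y - Z t))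
    (hD : cr (Y - X) (Z t - X) ≠ 0) (hV0 : V ≠ 0) (hb : β ≠ 0) (hz : ζ ≠ 0)
    (h0 : reflEq V X1 X Y (Z t) = 0) :
    ∃ c, c ≠ 0 ∧ HasDerivAt (fun t => reflEq V X1 X Y (Z t)) c t := by
  have hcX := hasDerivAt_const t X
  have hcV := hasDerivAt_const t V
  have hcX1 := hasDerivAt_const t X1
  have hcY := hasDerivAt_const t Y
  have h1 := ((hda_cr hcX1 (hZ.sub hcX)).mul (hda_cr hcV (hcY.sub hcX))).add
    ((hda_cr hcX1 (hcY.sub hcX)).mul (hda_cr hcV (hZ.sub hcX)))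
  refine ⟨_, ?_, h1⟩
  have hm : cr V (Y - X) ≠ 0 := by
    intro hm
    apply hV0
    refine cr_zero_of _ _ _ hD hm ?_
    have : β * cr (Y - X) (Z t - X) * cr V (Z t - X) = 0 := by
      have e : cr X1 (Y - X) = - β * cr (Y - X) (Z t - X) := by
        rw [e1]; simp only [cr, Prod.fst_add, Prod.snd_add, Prod.fst_sub, Prod.snd_sub,
          Prod.smul_fst, Prod.smul_snd, smul_eq_mul]; ring
      rw [reflEq, hm, e] at h0
      linear_combination -h0
    exact (mul_eq_zero.mp this).resolve_left (mul_ne_zero hb hD)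
  obtain ⟨u, hu⟩ : ∃ u, u = Y - X := ⟨_, rfl⟩
  obtain ⟨w, hw⟩ : ∃ w, w = Z t - X := ⟨_, rfl⟩
  have hxz : X - Z t = - w := by rw [hw]; abel
  have hyz : Y - Z t = u - w := by rw [hu, hw]; abel
  simp only [reflEq, Pi.sub_apply, e1, e3, hxz, hyz] at h0 ⊢
  rw [← hu] at hD hm h0 ⊢
  rw [← hw] at hD h0 ⊢
  simp only [cr, Prod.fst_add, Prod.snd_add, Prod.fst_sub, Prod.snd_sub, Prod.fst_neg,
      Prod.snd_neg, Prod.fst_zero, Prod.snd_zero,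
      Prod.smul_fst, Prod.smul_snd, smul_eq_mul] at hD hm h0 ⊢
  obtain ⟨m, hm'⟩ : ∃ m, m = V.1 * u.2 - V.2 * u.1 := ⟨_, rfl⟩
  obtain ⟨n, hn'⟩ : ∃ m, m = V.1 * w.2 - V.2 * w.1 := ⟨_, rfl⟩
  obtain ⟨D, hD'⟩ : ∃ m, m = u.1 * w.2 - u.2 * w.1 := ⟨_, rfl⟩
  have h3' : D * (α * m - β * n) = 0 := by rw [hm', hn', hD']; linear_combination h0
  rw [← hD'] at hD
  rw [← hm'] at hm
  have h3'' := (mul_eq_zero.mp h3').resolve_left hD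
  have : (-2 * β * ζ * m * D) ≠ 0 := by
    refine mul_ne_zero (mul_ne_zero (mul_ne_zero (mul_ne_zero (by norm_num) hb) hz) hm) hD
  intro h
  apply this
  rw [hm', hn'] at h3''
  rw [hm', hD']
  linear_combination h + (ε + ζ) * (u.1 * w.2 - u.2 * w.1) * h3''

lemma g_smooth (F : (ℂ × ℂ) × ℂ → ℂ) (g : ℂ × ℂ → ℂ) (z : ℂ × ℂ) (c : ℂ)
    (hF : ContDiffAt ℂ 2 F (z, g z)) (hd : HasDerivAt (fun t => F (z, t)) c (g z)) (hc : c ≠ 0)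
    (hg : ContinuousAt g z) (h0 : ∀ᶠ x in nhds z, F (x, g x) = 0) : ContDiffAt ℂ 2 g z := by
  have hinv : (fderiv ℂ F (z, g z) ∘L .inr ℂ (ℂ × ℂ) ℂ).IsInvertible := by
    have h1 : HasFDerivAt (fun t => F (z, t)) (fderiv ℂ F (z, g z) ∘L .inr ℂ (ℂ × ℂ) ℂ) (g z) := by
      have hF' := (hF.differentiableAt (by norm_num)).hasFDerivAt
      have hi : HasFDerivAt (fun t : ℂ => (z, t)) (ContinuousLinearMap.inr ℂ (ℂ × ℂ) ℂ) (g z) :=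
        hasFDerivAt_prodMk_right z (g z)
      exact HasFDerivAt.comp (g z) hF' hi
    have h2 := h1.unique hd.hasFDerivAt
    rw [h2]
    refine ⟨ContinuousLinearEquiv.unitsEquivAut ℂ (Units.mk0 c hc), ?_⟩
    ext
    simp
  have h1 := hF.eventually_apply_eq_iff_implicitFunction (by norm_num) hinv
  have h2 := hF.contDiffAt_implicitFunction (by norm_num) hinv
  refine h2.congr_of_eventuallyEq ?_
  have h3 : Filter.Tendsto (fun x => (x, g x)) (nhds z) (nhds (z, g z)) :=
    (continuousAt_id.prodMk hg)
  filter_upwards [h3.eventually h1, h0] with x hx hx0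
  exact (hx.mp (by rw [hx0, h0.self_of_nhds])).symm

/-- Identity principle through a reparametrisation. -/
lemma ident {h φ : ℂ → ℂ} {U : Set ℂ} {x c : ℂ} (hh : AnalyticOnNhd ℂ h U)
    (hU : IsPreconnected U) (hφ : HasDerivAt φ c x) (hc : c ≠ 0) (hx : φ x ∈ U)
    (h0 : ∀ᶠ y in nhds x, h (φ y) = 0) : ∀ y ∈ U, h y = 0 := by
  refine hh.eqOn_zero_of_preconnected_of_frequently_eq_zero hU hx ?_
  have h1 := hφ.tendsto_nhdsNE hc
  exact h1.frequently (h0.filter_mono nhdsWithin_le_nhds).frequently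

lemma ratio_const {h h' x x' : ℂ → ℂ} {U : Set ℂ} {s : ℂ} (hU : IsOpen U) (hs : s ∈ U)
    (hh : ∀ t ∈ U, HasDerivAt h (h' t) t) (hx : ∀ t ∈ U, HasDerivAt x (x' t) t)
    (hs0 : h s = 0) (hx0 : x s ≠ 0) (hw : ∀ t ∈ U, h' t * x t = h t * x' t) :
    ∀ᶠ t in nhds s, h t = 0 := by
  have hne := (hx s hs).continuousAt.eventually_ne hx0
  obtain ⟨r, hr, hb⟩ := Metric.eventually_nhds_iff_ball.mp (hne.and (hU.mem_nhds hs))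
  have hd : ∀ t ∈ Metric.ball s r, HasDerivAt (fun t => h t / x t) 0 t := by
    intro t ht
    obtain ⟨h1, h2⟩ := hb t ht
    refine ((hh t h2).div (hx t h2) h1).congr_deriv ?_
    rw [hw t h2]; simp
  refine Metric.eventually_nhds_iff_ball.mpr ⟨r, hr, fun t ht => ?_⟩
  have := Metric.isOpen_ball.is_const_of_deriv_eq_zero (convex_ball s r).isPreconnected
    (fun t ht => (hd t ht).differentiableAt.differentiableWithinAt)
    (fun t ht => (hd t ht).deriv) ht (Metric.mem_ball_self hr)
  simp only [hs0, zero_div] at this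
  exact (div_eq_zero_iff.mp this).resolve_right (hb t ht).1

/-- A curve with vanishing `a' ∧ a''` lies on a line. -/
lemma line_of_flat {a : ℂ → ℂ × ℂ} {U : Set ℂ} (hU : IsOpen U) (hUc : IsPreconnected U)
    (ha : AnalyticOnNhd ℂ a U) (ha' : ∀ s ∈ U, deriv a s ≠ 0)
    (hW : ∀ s ∈ U, cr (deriv a s) (deriv (deriv a) s) = 0) :
    ∀ s ∈ U, ∀ t ∈ U, cr (deriv a s) (deriv a t) = 0 ∧ cr (deriv a s) (a t - a s) = 0 := by
  intro s hs
  have h1 : ∀ t ∈ U, HasDerivAt a (deriv a t) t := fun t ht => (ha t ht).differentiableAt.hasDerivAt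
  have h2 : ∀ t ∈ U, HasDerivAt (deriv a) (deriv (deriv a) t) t :=
    fun t ht => (ha t ht).deriv.differentiableAt.hasDerivAt
  have hh : ∀ t ∈ U, HasDerivAt (fun t => cr (deriv a s) (deriv a t))
      (cr (deriv a s) (deriv (deriv a) t)) t := fun t ht =>
    (hda_cr (hasDerivAt_const t (deriv a s)) (h2 t ht)).congr_deriv (by simp [cr])
  have hloc : ∀ᶠ t in nhds s, cr (deriv a s) (deriv a t) = 0 := by
    have hs0 : cr (deriv a s) (deriv a s) = 0 := by simp only [cr]; ring
    by_cases hx : (deriv a s).1 = 0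
    · have hy : (deriv a s).2 ≠ 0 := fun hy => ha' s hs (Prod.ext hx hy)
      refine ratio_const hU hs hh (fun t ht => hda_snd (h2 t ht)) hs0 hy fun t ht => ?_
      have := hW t ht
      simp only [cr] at *
      linear_combination (deriv a s).2 * this
    · refine ratio_const hU hs hh (fun t ht => hda_fst (h2 t ht)) hs0 hx fun t ht => ?_
      have := hW t ht
      simp only [cr] at *
      linear_combination (deriv a s).1 * this
  have han : AnalyticOnNhd ℂ (fun t => cr (deriv a s) (deriv a t)) U := by
    apply DifferentiableOn.analyticOnNhd _ hU
    exact fun t ht => (hh t ht).differentiableAt.differentiableWithinAt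
  have hz := ident (φ := id) han hUc (hasDerivAt_id s) one_ne_zero hs hloc
  intro t ht
  refine ⟨hz t ht, ?_⟩
  have hd : ∀ t ∈ U, HasDerivAt (fun t => cr (deriv a s) (a t)) 0 t := fun t ht =>
    (hda_cr (hasDerivAt_const t (deriv a s)) (h1 t ht)).congr_deriv (by
      have := hz t ht
      simp only [cr, Prod.fst_zero, Prod.snd_zero] at this ⊢
      linear_combination this)
  have := hU.is_const_of_deriv_eq_zero hUc
    (fun t ht => (hd t ht).differentiableAt.differentiableWithinAt)
    (fun t ht => (hd t ht).deriv) ht hs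
  simp only [cr, Prod.fst_sub, Prod.snd_sub] at this ⊢
  linear_combination this

/-- First coefficient of `X1` in the basis `Y - X`, `Z - X`. -/
noncomputable def co1 (X1 X Y Z : ℂ × ℂ) : ℂ := cr X1 (Z - X) / cr (Y - X) (Z - X)

/-- Second coefficient of `X1` in the basis `Y - X`, `Z - X`. -/
noncomputable def co2 (X1 X Y Z : ℂ × ℂ) : ℂ := cr (Y - X) X1 / cr (Y - X) (Z - X)

lemma co_eq (X1 X Y Z : ℂ × ℂ) (hD : cr (Y - X) (Z - X) ≠ 0) :
    X1 = co1 X1 X Y Z • (Y - X) + co2 X1 X Y Z • (Z - X) := by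
  unfold co1 co2
  generalize Y - X = u at *
  generalize Z - X = w at *
  apply Prod.ext
  · simp only [Prod.fst_add, Prod.smul_fst, smul_eq_mul]
    field_simp
    simp only [cr]; ring
  · simp only [Prod.snd_add, Prod.smul_snd, smul_eq_mul]
    field_simp
    simp only [cr]; ring

lemma cr_cyc (X Y Z : ℂ × ℂ) : cr (Z - Y) (X - Y) = cr (Y - X) (Z - X) := by
  simp only [cr, Prod.fst_sub, Prod.snd_sub]; ring

lemma par {x y : ℂ × ℂ} (hx : x ≠ 0) (h : cr x y = 0) : ∃ σ : ℂ, y = σ • x := by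
  simp only [cr] at h
  by_cases h1 : x.1 = 0
  · have h2 : x.2 ≠ 0 := fun h2 => hx (Prod.ext h1 h2)
    refine ⟨y.2 / x.2, Prod.ext ?_ ?_⟩
    · simp only [Prod.smul_fst, smul_eq_mul]; field_simp; linear_combination -h
    · simp only [Prod.smul_snd, smul_eq_mul]; field_simp
  · refine ⟨y.1 / x.1, Prod.ext ?_ ?_⟩
    · simp only [Prod.smul_fst, smul_eq_mul]; field_simp
    · simp only [Prod.smul_snd, smul_eq_mul]; field_simp; linear_combination h

lemma sym_swap {v τ u w : ℂ × ℂ} (h : PlaneSym ℂ v τ u w) : PlaneSym ℂ v τ w u := by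
  obtain ⟨p, q, hp, hq, h1, h2⟩ := h
  refine ⟨q, p, hq, hp, by rwa [add_comm], ?_⟩
  rw [← neg_sub]; exact Submodule.neg_mem _ h2

lemma sym_coef {v X1 X Y Z : ℂ × ℂ} (h : PlaneSym ℂ v X1 (Y - X) (Z - X))
    (hD : cr (Y - X) (Z - X) ≠ 0) :
    co1 X1 X Y Z ≠ 0 ∧ co2 X1 X Y Z ≠ 0 ∧ reflEq v X1 X Y Z = 0 := by
  obtain ⟨p, q, hp, hq, h1, h2⟩ := h
  obtain ⟨c, hc⟩ := Submodule.mem_span_singleton.mp h1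
  obtain ⟨d, hd⟩ := Submodule.mem_span_singleton.mp h2
  unfold co1 co2 reflEq
  generalize Y - X = u at *
  generalize Z - X = w at *
  have c1 := congrArg Prod.fst hc
  have c2 := congrArg Prod.snd hc
  have d1 := congrArg Prod.fst hd
  have d2 := congrArg Prod.snd hd
  simp only [Prod.fst_add, Prod.snd_add, Prod.fst_sub, Prod.snd_sub, Prod.smul_fst,
    Prod.smul_snd, smul_eq_mul] at c1 c2 d1 d2
  have e1 : c * cr X1 w = p * cr u w := by
    simp only [cr]; linear_combination w.2 * c1 - w.1 * c2
  have e2 : c * cr u X1 = q * cr u w := by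
    simp only [cr]; linear_combination u.1 * c2 - u.2 * c1
  have e3 : d * cr v w = p * cr u w := by
    simp only [cr]; linear_combination w.2 * d1 - w.1 * d2
  have e4 : d * cr v u = q * cr u w := by
    simp only [cr]; linear_combination u.2 * d1 - u.1 * d2
  have n1 : c * cr X1 w ≠ 0 := by rw [e1]; exact mul_ne_zero hp hD
  have n2 : c * cr u X1 ≠ 0 := by rw [e2]; exact mul_ne_zero hq hD
  have n3 : d * cr v w ≠ 0 := by rw [e3]; exact mul_ne_zero hp hD
  refine ⟨div_ne_zero (right_ne_zero_of_mul n1) hD, div_ne_zero (right_ne_zero_of_mul n2) hD, ?_⟩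
  have : (c * d) * (cr X1 w * cr v u + cr X1 u * cr v w) = 0 := by
    have e5 : cr X1 u = - cr u X1 := by simp only [cr]; ring
    rw [e5]
    linear_combination (d * cr v u) * e1 + p * cr u w * e4 - (d * cr v w) * e2 - q * cr u w * e3
  exact (mul_eq_zero.mp this).resolve_left
    (mul_ne_zero (left_ne_zero_of_mul n1) (left_ne_zero_of_mul n3))

lemma cr_ne_of_col {A B C : ℂ × ℂ} (h : ¬ Collinear ℂ {A, B, C}) : cr (B - A) (C - A) ≠ 0 := by
  intro h0
  apply h
  by_cases hBA : B - A = 0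
  · have : B = A := sub_eq_zero.mp hBA
    subst this
    simp only [Set.mem_singleton_iff, Set.insert_eq_of_mem, Set.mem_insert_iff, true_or]
    exact collinear_pair ℂ _ _
  · obtain ⟨σ, hσ⟩ := par hBA h0
    rw [collinear_iff_of_mem (p₀ := A) (by simp)]
    refine ⟨B - A, ?_⟩
    intro x hx
    simp only [Set.mem_insert_iff, Set.mem_singleton_iff] at hx
    rcases hx with rfl | rfl | rfl
    · exact ⟨0, by simp⟩
    · exact ⟨1, by simp⟩
    · exact ⟨σ, by rw [← hσ]; simp⟩

lemma LDcomp {f : ℂ → ℂ × ℂ} {φ : ℂ × ℂ → ℂ} {f' : ℂ × ℂ} {z w : ℂ × ℂ} {k : ℂ}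
    (hf : HasDerivAt f f' (φ z)) (hφ : HasLineDerivAt ℂ φ k z w) :
    HasLineDerivAt ℂ (fun x => f (φ x)) (k • f') z w := by
  have h1 : HasDerivAt (fun t : ℂ => φ (z + t • w)) k 0 := hφ
  have e : φ (z + (0 : ℂ) • w) = φ z := by simp
  rw [← e] at hf
  exact HasDerivAt.scomp (0 : ℂ) hf h1

lemma vertexLD (X Y Z X1 : ℂ × ℂ → ℂ × ℂ) (z w : ℂ × ℂ) (i j k α β γ δ ε ζ κ₁ κ₂ : ℂ)
    (y1 z1 x2 : ℂ × ℂ)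
    (hX : HasLineDerivAt ℂ X (i • X1 z) z w) (hY : HasLineDerivAt ℂ Y (j • y1) z w)
    (hZ : HasLineDerivAt ℂ Z (k • z1) z w) (hX1 : HasLineDerivAt ℂ X1 (i • x2) z w)
    (e1 : X1 z = α • (Y z - X z) + β • (Z z - X z))
    (e2 : y1 = γ • (Z z - Y z) + δ • (X z - Y z))
    (e3 : z1 = ε • (X z - Z z) + ζ • (Y z - Z z))
    (e4 : x2 = κ₁ • (Y z - X z) + κ₂ • (Z z - X z))
    (hD : cr (Y z - X z) (Z z - X z) ≠ 0) :
    HasLineDerivAt ℂ (fun x => co1 (X1 x) (X x) (Y x) (Z x))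
      (i * κ₁ + α * j * (γ + δ) - β * k * ζ + (α + β) * i * α) z w ∧
    HasLineDerivAt ℂ (fun x => co2 (X1 x) (X x) (Y x) (Z x))
      (i * κ₂ - α * j * γ + β * k * (ε + ζ) + (α + β) * i * β) z w ∧
    HasLineDerivAt ℂ (fun x => cr (Y x - X x) (Z x - X x))
      (-(i * (α + β) + j * (γ + δ) + k * (ε + ζ)) * cr (Y z - X z) (Z z - X z)) z w := by
  have e : z + (0 : ℂ) • w = z := by simp
  have := vertex (fun t => X (z + t • w)) (fun t => Y (z + t • w)) (fun t => Z (z + t • w))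
    (fun t => X1 (z + t • w)) i j k α β γ δ ε ζ κ₁ κ₂ y1 z1 x2
    (by simp only [e]; exact hX) hY hZ hX1 (by simp only [e]; exact e1) (by simp only [e]; exact e2)
    (by simp only [e]; exact e3) (by simp only [e]; exact e4) (by simp only [e]; exact hD)
  simp only [e] at this
  exact this

lemma field_relLD (X Y Z X1 V : ℂ × ℂ → ℂ × ℂ) (z w : ℂ × ℂ) (j k α β γ δ ε ζ : ℂ)
    (y1 z1 : ℂ × ℂ)
    (hX : HasLineDerivAt ℂ X 0 z w) (hY : HasLineDerivAt ℂ Y (j • y1) z w)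
    (hZ : HasLineDerivAt ℂ Z (k • z1) z w) (hX1 : HasLineDerivAt ℂ X1 0 z w)
    (hV : HasLineDerivAt ℂ V 0 z w)
    (e1 : X1 z = α • (Y z - X z) + β • (Z z - X z))
    (e2 : y1 = γ • (Z z - Y z) + δ • (X z - Y z))
    (e3 : z1 = ε • (X z - Z z) + ζ • (Y z - Z z))
    (hD : cr (Y z - X z) (Z z - X z) ≠ 0) (hV0 : V z ≠ 0) (ha : α ≠ 0) (hb : β ≠ 0)
    (h0 : ∀ᶠ x in nhds z, reflEq (V x) (X1 x) (X x) (Y x) (Z x) = 0) :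
    j * (γ * α ^ 2) = k * (ζ * β ^ 2) := by
  have e : z + (0 : ℂ) • w = z := by simp
  exact field_rel (fun t => X (z + t • w)) (fun t => Y (z + t • w)) (fun t => Z (z + t • w))
    (fun t => X1 (z + t • w)) (fun t => V (z + t • w)) j k α β γ δ ε ζ y1 z1 hX hY hZ hX1 hV
    (by simp only [e]; exact e1) (by simp only [e]; exact e2)
    (by simp only [e]; exact e3) (by simp only [e]; exact hD) (by simp only [e]; exact hV0) ha hb
    ((line_tendsto z w).eventually h0)

lemma sym_mixed {g : ℂ × ℂ → ℂ} {z : ℂ × ℂ} (hg : ContDiffAt ℂ 2 g z) :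
    ∃ l, HasLineDerivAt ℂ (fun x => fderiv ℂ g x (1, 0)) l z (0, 1) ∧
      HasLineDerivAt ℂ (fun x => fderiv ℂ g x (0, 1)) l z (1, 0) := by
  have h1 : DifferentiableAt ℂ (fderiv ℂ g) z :=
    (hg.fderiv_right (m := 1) (by norm_num)).differentiableAt (by norm_num)
  have h2 : IsSymmSndFDerivAt ℂ g z := hg.isSymmSndFDerivAt (by simp)
  have h3 : ∀ v : ℂ × ℂ, HasFDerivAt (fun x => fderiv ℂ g x v)
      ((ContinuousLinearMap.apply ℂ ℂ v) ∘L (fderiv ℂ (fderiv ℂ g) z)) z := fun v =>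
    (ContinuousLinearMap.apply ℂ ℂ v).hasFDerivAt.comp z h1.hasFDerivAt
  refine ⟨fderiv ℂ (fderiv ℂ g) z (0, 1) (1, 0), (h3 (1, 0)).hasLineDerivAt (0, 1), ?_⟩
  rw [h2 (0, 1) (1, 0)]
  exact (h3 (0, 1)).hasLineDerivAt (1, 0)

/-- Determinant of three vectors. -/
def det3 (x y z : ℂ × ℂ × ℂ) : ℂ :=
  x.1 * (y.2.1 * z.2.2 - y.2.2 * z.2.1) - x.2.1 * (y.1 * z.2.2 - y.2.2 * z.1)
    + x.2.2 * (y.1 * z.2.1 - y.2.1 * z.1)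

lemma span_of_det {P Q R X : ℂ × ℂ × ℂ} (h : det3 P Q R ≠ 0) (h0 : det3 P Q X = 0) :
    X ∈ Submodule.span ℂ {P, Q} := by
  rw [Submodule.mem_span_pair]
  refine ⟨det3 X Q R / det3 P Q R, det3 P X R / det3 P Q R, ?_⟩
  have key : ∀ x p q r : ℂ, det3 P Q R * x = det3 X Q R * p + det3 P X R * q + det3 P Q X * r →
      det3 X Q R / det3 P Q R * p + det3 P X R / det3 P Q R * q = x := by
    intro x p q r hx
    rw [h0] at hx
    field_simp
    linear_combination -hx
  refine Prod.ext ?_ (Prod.ext ?_ ?_)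
  · simp only [Prod.fst_add, Prod.smul_fst, smul_eq_mul]
    exact key _ _ _ R.1 (by simp only [det3]; ring)
  · simp only [Prod.snd_add, Prod.fst_add, Prod.smul_fst, Prod.smul_snd, smul_eq_mul]
    exact key _ _ _ R.2.1 (by simp only [det3]; ring)
  · simp only [Prod.snd_add, Prod.smul_snd, smul_eq_mul]
    exact key _ _ _ R.2.2 (by simp only [det3]; ring)

lemma linInd_of_det {P Q R : ℂ × ℂ × ℂ} (h : det3 P Q R ≠ 0) :
    LinearIndependent ℂ ![P, Q, R] := by
  rw [Fintype.linearIndependent_iff]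
  intro x hx
  rw [Fin.sum_univ_three] at hx
  simp only [Matrix.cons_val_zero, Matrix.cons_val_one, Matrix.cons_val] at hx
  have c1 := congrArg (fun v => v.1) hx
  have c2 := congrArg (fun v => v.2.1) hx
  have c3 := congrArg (fun v => v.2.2) hx
  simp only [Prod.fst_add, Prod.snd_add, Prod.smul_fst, Prod.smul_snd, smul_eq_mul, Prod.fst_zero,
    Prod.snd_zero] at c1 c2 c3
  have e0 : x 0 * det3 P Q R = 0 := by
    simp only [det3]
    linear_combination (Q.2.1 * R.2.2 - Q.2.2 * R.2.1) * c1 - (Q.1 * R.2.2 - Q.2.2 * R.1) * c2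
      + (Q.1 * R.2.1 - Q.2.1 * R.1) * c3
  have e1 : x 1 * det3 P Q R = 0 := by
    simp only [det3]
    linear_combination -(P.2.1 * R.2.2 - P.2.2 * R.2.1) * c1 + (P.1 * R.2.2 - P.2.2 * R.1) * c2
      - (P.1 * R.2.1 - P.2.1 * R.1) * c3
  have e2 : x 2 * det3 P Q R = 0 := by
    simp only [det3]
    linear_combination (P.2.1 * Q.2.2 - P.2.2 * Q.2.1) * c1 - (P.1 * Q.2.2 - P.2.2 * Q.1) * c2
      + (P.1 * Q.2.1 - P.2.1 * Q.1) * c3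
  intro i
  fin_cases i
  · exact (mul_eq_zero.mp e0).resolve_right h
  · exact (mul_eq_zero.mp e1).resolve_right h
  · exact (mul_eq_zero.mp e2).resolve_right h

/-- The vertices of the triangle. -/
def pt (α β ε ζ : ℂ) (A B C : ℂ × ℂ) : ℂ × ℂ × ℂ :=
  (α * ε * A.1 + α * ζ * B.1 + β * ζ * C.1, α * ε * A.2 + α * ζ * B.2 + β * ζ * C.2,
    α * ε + α * ζ + β * ζ)

/-- Direction from the affine point `X` to the projective point `R`. -/
def dirTo (R : ℂ × ℂ × ℂ) (X : ℂ × ℂ) : ℂ × ℂ := (R.1, R.2.1) - R.2.2 • X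

lemma det_pt (α β γ δ ε ζ : ℂ) (A B C : ℂ × ℂ) :
    det3 (pt α β ε ζ A B C) (pt γ δ α β B C A) (pt ε ζ γ δ C A B) =
      (α * γ * ε - β * δ * ζ) ^ 2 * cr (B - A) (C - A) := by
  simp only [det3, pt, cr, Prod.fst_sub, Prod.snd_sub]; ring

lemma side_pt (α β γ δ ε ζ σ : ℂ) (A B C X : ℂ × ℂ)
    (h : X - A = σ • (α • (B - A) + β • (C - A))) :
    det3 (pt α β ε ζ A B C) (pt γ δ α β B C A) (liftPt ℂ X) = 0 := by
  have h' : X = A + σ • (α • (B - A) + β • (C - A)) := by rw [← h]; abel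
  rw [h']
  simp only [det3, pt, liftPt, Prod.fst_sub, Prod.snd_sub, Prod.fst_add, Prod.snd_add,
    Prod.smul_fst, Prod.smul_snd, smul_eq_mul]; ring

lemma on_left (γ δ ε ζ : ℂ) (A B C : ℂ × ℂ) :
    cr (dirTo (pt ε ζ γ δ C A B) B) (γ • (C - B) + δ • (A - B)) = 0 := by
  simp only [dirTo, pt, cr, Prod.fst_sub, Prod.snd_sub, Prod.fst_add, Prod.snd_add,
    Prod.smul_fst, Prod.smul_snd, smul_eq_mul]; ring

lemma on_right (γ δ ε ζ : ℂ) (A B C : ℂ × ℂ) :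
    cr (dirTo (pt ε ζ γ δ C A B) C) (ε • (A - C) + ζ • (B - C)) = 0 := by
  simp only [dirTo, pt, cr, Prod.fst_sub, Prod.snd_sub, Prod.fst_add, Prod.snd_add,
    Prod.smul_fst, Prod.smul_snd, smul_eq_mul]; ring

lemma trans_line {R : ℂ × ℂ × ℂ} {X0 X1 X X' : ℂ × ℂ} (h : cr (dirTo R X0) X1 = 0)
    (hX1 : X1 ≠ 0) (h1 : cr X1 X' = 0) (h2 : cr X1 (X - X0) = 0) : cr (dirTo R X) X' = 0 := by
  obtain ⟨σ, rfl⟩ := par hX1 h1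
  obtain ⟨τ, hτ⟩ := par hX1 h2
  have h' : X = X0 + τ • X1 := by rw [← hτ]; abel
  rw [h']
  simp only [dirTo, cr, Prod.fst_sub, Prod.snd_sub, Prod.fst_add, Prod.snd_add,
    Prod.smul_fst, Prod.smul_snd, smul_eq_mul] at h ⊢
  linear_combination σ * h

lemma field_through (α β γ δ ε ζ : ℂ) (R : ℂ × ℂ × ℂ) (X Y Z V X1 Y1 Z1 : ℂ × ℂ)
    (ha : α ≠ 0) (hd : δ ≠ 0) (hz : ζ ≠ 0)
    (e1 : X1 = α • (Y - X) + β • (Z - X))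
    (e2 : Y1 = γ • (Z - Y) + δ • (X - Y))
    (e3 : Z1 = ε • (X - Z) + ζ • (Y - Z))
    (hD : cr (Y - X) (Z - X) ≠ 0) (h0 : reflEq V X1 X Y Z = 0)
    (hrel : α * γ * ε = - (β * δ * ζ))
    (h2 : cr (dirTo R Y) Y1 = 0) (h3 : cr (dirTo R Z) Z1 = 0) : cr (dirTo R X) V = 0 := by
  obtain ⟨u, hu⟩ : ∃ u, u = Y - X := ⟨_, rfl⟩
  obtain ⟨w, hw⟩ : ∃ w, w = Z - X := ⟨_, rfl⟩
  obtain ⟨S, hS⟩ : ∃ S, S = dirTo R X := ⟨_, rfl⟩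
  have hY : dirTo R Y = S - R.2.2 • u := by rw [hS, hu]; simp only [dirTo, smul_sub]; abel
  have hZ : dirTo R Z = S - R.2.2 • w := by rw [hS, hw]; simp only [dirTo, smul_sub]; abel
  have hyx : Z - Y = w - u := by rw [hu, hw]; abel
  have hxy : X - Y = - u := by rw [hu]; abel
  have hxz : X - Z = - w := by rw [hw]; abel
  have hyz : Y - Z = u - w := by rw [hu, hw]; abel
  rw [reflEq, e1, ← hu, ← hw] at h0
  rw [hY, e2, hyx, hxy] at h2
  rw [hZ, e3, hxz, hyz] at h3
  rw [← hS]
  rw [← hu, ← hw] at hD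
  have a1 : α * cr S u = β * cr S w := by
    have : (δ * ζ) * (α * cr S u - β * cr S w) = 0 := by
      simp only [cr, Prod.fst_sub, Prod.snd_sub, Prod.fst_add, Prod.snd_add, Prod.fst_neg,
        Prod.snd_neg, Prod.smul_fst, Prod.smul_snd, smul_eq_mul] at h2 h3 ⊢
      linear_combination (-α * ζ) * h2 - (α * γ) * h3 - (S.1 * w.2 - S.2 * w.1) * hrel
    exact sub_eq_zero.mp ((mul_eq_zero.mp this).resolve_left (mul_ne_zero hd hz))
  have a2 : α * cr V u = β * cr V w := by
    have : cr u w * (α * cr V u - β * cr V w) = 0 := by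
      simp only [cr, Prod.fst_add, Prod.snd_add,
        Prod.smul_fst, Prod.smul_snd, smul_eq_mul] at h0 ⊢
      linear_combination h0
    exact sub_eq_zero.mp ((mul_eq_zero.mp this).resolve_left hD)
  have : (α * cr u w) * cr S V = 0 := by
    -- `cr u w • cr S V` by the Plücker relation
    have pl : cr u w * cr S V = cr S w * cr u V + cr S u * cr V w := by
      simp only [cr]; ring
    have e : cr u V = - cr V u := by simp only [cr]; ring
    rw [e] at pl
    linear_combination α * pl + cr V w * a1 - cr S w * a2
  exact (mul_eq_zero.mp this).resolve_left (mul_ne_zero ha hD)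

lemma curve_concl {a v : ℂ → ℂ × ℂ} {U : Set ℂ} (hU : IsOpen U) (hUc : IsPreconnected U)
    (ha : AnalyticOnNhd ℂ a U) (hv : AnalyticOnNhd ℂ v U) (ha' : ∀ s ∈ U, deriv a s ≠ 0)
    (hvt : ∀ s ∈ U, v s ∉ Submodule.span ℂ {deriv a s}) {P Q R : ℂ × ℂ × ℂ}
    (hdet : det3 P Q R ≠ 0) (hside : ∀ s ∈ U, det3 P Q (liftPt ℂ (a s)) = 0)
    {φ : ℂ → ℂ} {c x : ℂ} (hφ : HasDerivAt φ c x) (hc : c ≠ 0) (hx : φ x ∈ U)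
    (h0 : ∀ᶠ y in nhds x, cr (dirTo R (a (φ y))) (v (φ y)) = 0) :
    ∀ s ∈ U, liftPt ℂ (a s) ∈ Submodule.span ℂ {P, Q} ∧
        R ∈ Submodule.span ℂ {liftPt ℂ (a s), liftDir ℂ (v s)} := by
  have hd : ∀ t ∈ U, DifferentiableAt ℂ (fun s => cr (dirTo R (a s)) (v s)) t := by
    intro t ht
    have h1 : HasDerivAt (fun s => dirTo R (a s)) (0 - R.2.2 • deriv a t) t :=
      (hasDerivAt_const t (R.1, R.2.1)).sub
        ((ha t ht).differentiableAt.hasDerivAt.const_smul R.2.2)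
    exact (hda_cr h1 (hv t ht).differentiableAt.hasDerivAt).differentiableAt
  have han : AnalyticOnNhd ℂ (fun s => cr (dirTo R (a s)) (v s)) U :=
    DifferentiableOn.analyticOnNhd (fun t ht => (hd t ht).differentiableWithinAt) hU
  have hz := ident han hUc hφ hc hx h0
  intro s hs
  refine ⟨span_of_det hdet (hside s hs), ?_⟩
  refine span_of_det (R := liftDir ℂ (deriv a s)) ?_ ?_
  · intro h
    have h' : cr (deriv a s) (v s) = 0 := by
      simp only [det3, liftPt, liftDir, cr] at h ⊢
      linear_combination -h
    obtain ⟨σ, hσ⟩ := par (ha' s hs) h'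
    exact hvt s hs (Submodule.mem_span_singleton.mpr ⟨σ, hσ.symm⟩)
  · have := hz s hs
    simp only [det3, liftPt, liftDir, cr, dirTo, Prod.fst_sub, Prod.snd_sub, Prod.smul_fst,
      Prod.smul_snd, smul_eq_mul] at this ⊢
    linear_combination -this
/-- **Theorem 1.3, complex case.** Every 3-reflective triple of complex analytic
line-framed curves in `ℂ²` is right-spherical. -/
theorem three_reflective_complex_analytic_planar_is_right_spherical
    (U₁ U₂ U₃ : Set ℂ) (a₁ a₂ a₃ v₁ v₂ v₃ : ℂ → ℂ × ℂ)
    (hU₁o : IsOpen U₁) (hU₂o : IsOpen U₂) (hU₃o : IsOpen U₃)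
    (hU₁c : IsConnected U₁) (hU₂c : IsConnected U₂) (hU₃c : IsConnected U₃)
    -- the `(aᵢ, vᵢ)` are complex analytic line-framed curves
    (ha₁ : AnalyticOnNhd ℂ a₁ U₁) (ha₂ : AnalyticOnNhd ℂ a₂ U₂)
    (ha₃ : AnalyticOnNhd ℂ a₃ U₃)
    (ha₁i : Set.InjOn a₁ U₁) (ha₂i : Set.InjOn a₂ U₂) (ha₃i : Set.InjOn a₃ U₃)
    (ha₁' : ∀ s ∈ U₁, deriv a₁ s ≠ 0) (ha₂' : ∀ u ∈ U₂, deriv a₂ u ≠ 0)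
    (ha₃' : ∀ t ∈ U₃, deriv a₃ t ≠ 0)
    (hv₁ : AnalyticOnNhd ℂ v₁ U₁) (hv₂ : AnalyticOnNhd ℂ v₂ U₂)
    (hv₃ : AnalyticOnNhd ℂ v₃ U₃)
    (hv₁t : ∀ s ∈ U₁, v₁ s ∉ Submodule.span ℂ {deriv a₁ s})
    (hv₂t : ∀ u ∈ U₂, v₂ u ∉ Submodule.span ℂ {deriv a₂ u})
    (hv₃t : ∀ t ∈ U₃, v₃ t ∉ Submodule.span ℂ {deriv a₃ t})
    -- 3-reflectivity data (Ω, g)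
    (Ω : Set (ℂ × ℂ)) (g : ℂ × ℂ → ℂ)
    (hΩo : IsOpen Ω) (hΩne : Ω.Nonempty) (hΩ : Ω ⊆ U₁ ×ˢ U₂)
    (hg : ContinuousOn g Ω) (hgm : ∀ z ∈ Ω, g z ∈ U₃)
    -- (i) vertices not collinear
    (hcol : ∀ z ∈ Ω, ¬ Collinear ℂ {a₁ z.1, a₂ z.2, a₃ (g z)})
    -- (ii) non-tangency
    (htan₁ : ∀ z ∈ Ω, a₂ z.2 - a₁ z.1 ∉ Submodule.span ℂ {deriv a₁ z.1} ∧
      a₃ (g z) - a₁ z.1 ∉ Submodule.span ℂ {deriv a₁ z.1})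
    (htan₂ : ∀ z ∈ Ω, a₁ z.1 - a₂ z.2 ∉ Submodule.span ℂ {deriv a₂ z.2} ∧
      a₃ (g z) - a₂ z.2 ∉ Submodule.span ℂ {deriv a₂ z.2})
    (htan₃ : ∀ z ∈ Ω, a₁ z.1 - a₃ (g z) ∉ Submodule.span ℂ {deriv a₃ (g z)} ∧
      a₂ z.2 - a₃ (g z) ∉ Submodule.span ℂ {deriv a₃ (g z)})
    -- (iii) reflection law at each vertex
    (href₁ : ∀ z ∈ Ω,
      PlaneSym ℂ (v₁ z.1) (deriv a₁ z.1) (a₂ z.2 - a₁ z.1) (a₃ (g z) - a₁ z.1))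
    (href₂ : ∀ z ∈ Ω,
      PlaneSym ℂ (v₂ z.2) (deriv a₂ z.2) (a₁ z.1 - a₂ z.2) (a₃ (g z) - a₂ z.2))
    (href₃ : ∀ z ∈ Ω,
      PlaneSym ℂ (v₃ (g z)) (deriv a₃ (g z)) (a₁ z.1 - a₃ (g z)) (a₂ z.2 - a₃ (g z))) :
    ∃ P Q R : ℂ × ℂ × ℂ, LinearIndependent ℂ ![P, Q, R] ∧
      (∀ s ∈ U₁, liftPt ℂ (a₁ s) ∈ Submodule.span ℂ {P, Q} ∧
        R ∈ Submodule.span ℂ {liftPt ℂ (a₁ s), liftDir ℂ (v₁ s)}) ∧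
      (∀ u ∈ U₂, liftPt ℂ (a₂ u) ∈ Submodule.span ℂ {Q, R} ∧
        P ∈ Submodule.span ℂ {liftPt ℂ (a₂ u), liftDir ℂ (v₂ u)}) ∧
      (∀ t ∈ U₃, liftPt ℂ (a₃ t) ∈ Submodule.span ℂ {R, P} ∧
        Q ∈ Submodule.span ℂ {liftPt ℂ (a₃ t), liftDir ℂ (v₃ t)}) := by
  -- abbreviations
  let A : ℂ × ℂ → ℂ × ℂ := fun z => a₁ z.1
  let B : ℂ × ℂ → ℂ × ℂ := fun z => a₂ z.2
  let C : ℂ × ℂ → ℂ × ℂ := fun z => a₃ (g z)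
  let A1 : ℂ × ℂ → ℂ × ℂ := fun z => deriv a₁ z.1
  let B1 : ℂ × ℂ → ℂ × ℂ := fun z => deriv a₂ z.2
  let C1 : ℂ × ℂ → ℂ × ℂ := fun z => deriv a₃ (g z)
  let A2 : ℂ × ℂ → ℂ × ℂ := fun z => deriv (deriv a₁) z.1
  let B2 : ℂ × ℂ → ℂ × ℂ := fun z => deriv (deriv a₂) z.2
  let C2 : ℂ × ℂ → ℂ × ℂ := fun z => deriv (deriv a₃) (g z)
  let a : ℂ × ℂ → ℂ := fun x => co1 (A1 x) (A x) (B x) (C x)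
  let b : ℂ × ℂ → ℂ := fun x => co2 (A1 x) (A x) (B x) (C x)
  let c : ℂ × ℂ → ℂ := fun x => co1 (B1 x) (B x) (C x) (A x)
  let d : ℂ × ℂ → ℂ := fun x => co2 (B1 x) (B x) (C x) (A x)
  let e : ℂ × ℂ → ℂ := fun x => co1 (C1 x) (C x) (A x) (B x)
  let f : ℂ × ℂ → ℂ := fun x => co2 (C1 x) (C x) (A x) (B x)
  let ka : ℂ × ℂ → ℂ := fun x => co1 (A2 x) (A x) (B x) (C x)
  let kb : ℂ × ℂ → ℂ := fun x => co2 (A2 x) (A x) (B x) (C x)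
  let kc : ℂ × ℂ → ℂ := fun x => co1 (B2 x) (B x) (C x) (A x)
  let kd : ℂ × ℂ → ℂ := fun x => co2 (B2 x) (B x) (C x) (A x)
  let ke : ℂ × ℂ → ℂ := fun x => co1 (C2 x) (C x) (A x) (B x)
  let kf : ℂ × ℂ → ℂ := fun x => co2 (C2 x) (C x) (A x) (B x)
  let p : ℂ × ℂ → ℂ := fun x => fderiv ℂ g x (1, 0)
  let q : ℂ × ℂ → ℂ := fun x => fderiv ℂ g x (0, 1)
  have m1 : ∀ z ∈ Ω, z.1 ∈ U₁ := fun z hz => (hΩ hz).1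
  have m2 : ∀ z ∈ Ω, z.2 ∈ U₂ := fun z hz => (hΩ hz).2
  -- nondegeneracy
  have DA : ∀ z ∈ Ω, cr (B z - A z) (C z - A z) ≠ 0 := fun z hz => cr_ne_of_col (hcol z hz)
  have DB : ∀ z ∈ Ω, cr (C z - B z) (A z - B z) ≠ 0 := fun z hz => by
    rw [cr_cyc]; exact DA z hz
  have DC : ∀ z ∈ Ω, cr (A z - C z) (B z - C z) ≠ 0 := fun z hz => by
    rw [cr_cyc]; exact DB z hz
  have sA : ∀ z ∈ Ω, a z ≠ 0 ∧ b z ≠ 0 ∧ reflEq (v₁ z.1) (A1 z) (A z) (B z) (C z) = 0 :=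
    fun z hz => sym_coef (href₁ z hz) (DA z hz)
  have sB : ∀ z ∈ Ω, c z ≠ 0 ∧ d z ≠ 0 ∧ reflEq (v₂ z.2) (B1 z) (B z) (C z) (A z) = 0 :=
    fun z hz => sym_coef (sym_swap (href₂ z hz)) (DB z hz)
  have sC : ∀ z ∈ Ω, e z ≠ 0 ∧ f z ≠ 0 ∧ reflEq (v₃ (g z)) (C1 z) (C z) (A z) (B z) = 0 :=
    fun z hz => sym_coef (href₃ z hz) (DC z hz)
  have eA : ∀ z ∈ Ω, A1 z = a z • (B z - A z) + b z • (C z - A z) :=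
    fun z hz => co_eq _ _ _ _ (DA z hz)
  have eB : ∀ z ∈ Ω, B1 z = c z • (C z - B z) + d z • (A z - B z) :=
    fun z hz => co_eq _ _ _ _ (DB z hz)
  have eC : ∀ z ∈ Ω, C1 z = e z • (A z - C z) + f z • (B z - C z) :=
    fun z hz => co_eq _ _ _ _ (DC z hz)
  have eA2 : ∀ z ∈ Ω, A2 z = ka z • (B z - A z) + kb z • (C z - A z) :=
    fun z hz => co_eq _ _ _ _ (DA z hz)
  have eB2 : ∀ z ∈ Ω, B2 z = kc z • (C z - B z) + kd z • (A z - B z) :=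
    fun z hz => co_eq _ _ _ _ (DB z hz)
  have eC2 : ∀ z ∈ Ω, C2 z = ke z • (A z - C z) + kf z • (B z - C z) :=
    fun z hz => co_eq _ _ _ _ (DC z hz)
  have nv1 : ∀ s ∈ U₁, v₁ s ≠ 0 := fun s hs h => hv₁t s hs (by rw [h]; exact Submodule.zero_mem _)
  have nv2 : ∀ s ∈ U₂, v₂ s ≠ 0 := fun s hs h => hv₂t s hs (by rw [h]; exact Submodule.zero_mem _)
  have nv3 : ∀ s ∈ U₃, v₃ s ≠ 0 := fun s hs h => hv₃t s hs (by rw [h]; exact Submodule.zero_mem _)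
  -- smoothness of `g`
  have gs : ∀ z ∈ Ω, ContDiffAt ℂ 2 g z := by
    intro z hz
    obtain ⟨k, hk, hkd⟩ := refl_deriv_ne (A z) (B z) (v₁ z.1) (A1 z) a₃ (g z) (a z) (b z) (e z)
      (f z) (C1 z) ((ha₃ _ (hgm z hz)).differentiableAt.hasDerivAt) (eA z hz) (eC z hz) (DA z hz)
      (nv1 _ (m1 z hz)) (sA z hz).2.1 (sC z hz).2.1 (sA z hz).2.2
    refine g_smooth (fun x => reflEq (v₁ x.1.1) (deriv a₁ x.1.1) (a₁ x.1.1) (a₂ x.1.2) (a₃ x.2))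
      g z k ?_ hkd hk (hg.continuousAt (hΩo.mem_nhds hz)) ?_
    · have c1 : ContDiffAt ℂ 2 (fun x : (ℂ × ℂ) × ℂ => a₁ x.1.1) (z, g z) :=
        ContDiffAt.comp (g := a₁) (f := fun x : (ℂ × ℂ) × ℂ => x.1.1) (z, g z)
          (ha₁ _ (m1 z hz)).contDiffAt (by fun_prop)
      have c2 : ContDiffAt ℂ 2 (fun x : (ℂ × ℂ) × ℂ => a₂ x.1.2) (z, g z) :=
        ContDiffAt.comp (g := a₂) (f := fun x : (ℂ × ℂ) × ℂ => x.1.2) (z, g z)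
          (ha₂ _ (m2 z hz)).contDiffAt (by fun_prop)
      have c3 : ContDiffAt ℂ 2 (fun x : (ℂ × ℂ) × ℂ => a₃ x.2) (z, g z) :=
        ContDiffAt.comp (g := a₃) (f := fun x : (ℂ × ℂ) × ℂ => x.2) (z, g z)
          (ha₃ _ (hgm z hz)).contDiffAt (by fun_prop)
      have c4 : ContDiffAt ℂ 2 (fun x : (ℂ × ℂ) × ℂ => v₁ x.1.1) (z, g z) :=
        ContDiffAt.comp (g := v₁) (f := fun x : (ℂ × ℂ) × ℂ => x.1.1) (z, g z)
          (hv₁ _ (m1 z hz)).contDiffAt (by fun_prop)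
      have c5 : ContDiffAt ℂ 2 (fun x : (ℂ × ℂ) × ℂ => deriv a₁ x.1.1) (z, g z) :=
        ContDiffAt.comp (g := deriv a₁) (f := fun x : (ℂ × ℂ) × ℂ => x.1.1) (z, g z)
          (ha₁ _ (m1 z hz)).deriv.contDiffAt (by fun_prop)
      have hcr : ∀ F G : (ℂ × ℂ) × ℂ → ℂ × ℂ, ContDiffAt ℂ 2 F (z, g z) →
          ContDiffAt ℂ 2 G (z, g z) → ContDiffAt ℂ 2 (fun x => cr (F x) (G x)) (z, g z) :=
        fun F G hF hG => (hF.fst.mul hG.snd).sub (hF.snd.mul hG.fst)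
      have c6 := c2.sub c1
      have c7 := c3.sub c1
      exact ((hcr _ _ c5 c7).mul (hcr _ _ c4 c6)).add ((hcr _ _ c5 c6).mul (hcr _ _ c4 c7))
    · filter_upwards [hΩo.mem_nhds hz] with x hx
      exact (sA x hx).2.2
  have gd : ∀ z ∈ Ω, ∀ i j : ℂ, HasLineDerivAt ℂ g (i * p z + j * q z) z (i, j) := by
    intro z hz i j
    have h1 := ((gs z hz).differentiableAt (by norm_num)).hasFDerivAt.hasLineDerivAt (i, j)
    have h2 : fderiv ℂ g z (i, j) = i * p z + j * q z := by
      have : ((i, j) : ℂ × ℂ) = i • (1, 0) + j • (0, 1) := by simp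
      rw [this, map_add, map_smul, map_smul]; rfl
    rwa [h2] at h1
  have fd : ∀ (z : ℂ × ℂ) (i j : ℂ), HasLineDerivAt ℂ (fun x : ℂ × ℂ => x.1) i z (i, j) :=
    fun z i j => (hasFDerivAt_fst (𝕜 := ℂ) (E := ℂ) (F := ℂ) (p := z)).hasLineDerivAt (i, j)
  have sd : ∀ (z : ℂ × ℂ) (i j : ℂ), HasLineDerivAt ℂ (fun x : ℂ × ℂ => x.2) j z (i, j) :=
    fun z i j => (hasFDerivAt_snd (𝕜 := ℂ) (E := ℂ) (F := ℂ) (p := z)).hasLineDerivAt (i, j)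
  -- line derivatives of the vertices
  have lA : ∀ z ∈ Ω, ∀ i j : ℂ, HasLineDerivAt ℂ A (i • A1 z) z (i, j) := fun z hz i j =>
    LDcomp (φ := fun x : ℂ × ℂ => x.1) (ha₁ _ (m1 z hz)).differentiableAt.hasDerivAt (fd z i j)
  have lA1 : ∀ z ∈ Ω, ∀ i j : ℂ, HasLineDerivAt ℂ A1 (i • A2 z) z (i, j) := fun z hz i j =>
    LDcomp (φ := fun x : ℂ × ℂ => x.1) (ha₁ _ (m1 z hz)).deriv.differentiableAt.hasDerivAt
      (fd z i j)
  have lV1 : ∀ z ∈ Ω, ∀ i j : ℂ, HasLineDerivAt ℂ (fun x => v₁ x.1) (i • deriv v₁ z.1) z (i, j) :=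
    fun z hz i j =>
    LDcomp (φ := fun x : ℂ × ℂ => x.1) (hv₁ _ (m1 z hz)).differentiableAt.hasDerivAt (fd z i j)
  have lB : ∀ z ∈ Ω, ∀ i j : ℂ, HasLineDerivAt ℂ B (j • B1 z) z (i, j) := fun z hz i j =>
    LDcomp (φ := fun x : ℂ × ℂ => x.2) (ha₂ _ (m2 z hz)).differentiableAt.hasDerivAt (sd z i j)
  have lB1 : ∀ z ∈ Ω, ∀ i j : ℂ, HasLineDerivAt ℂ B1 (j • B2 z) z (i, j) := fun z hz i j =>
    LDcomp (φ := fun x : ℂ × ℂ => x.2) (ha₂ _ (m2 z hz)).deriv.differentiableAt.hasDerivAt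
      (sd z i j)
  have lV2 : ∀ z ∈ Ω, ∀ i j : ℂ, HasLineDerivAt ℂ (fun x => v₂ x.2) (j • deriv v₂ z.2) z (i, j) :=
    fun z hz i j =>
    LDcomp (φ := fun x : ℂ × ℂ => x.2) (hv₂ _ (m2 z hz)).differentiableAt.hasDerivAt (sd z i j)
  have lC : ∀ z ∈ Ω, ∀ i j k : ℂ, k = i * p z + j * q z →
      HasLineDerivAt ℂ C (k • C1 z) z (i, j) := fun z hz i j k hk => by
    subst hk
    exact LDcomp (ha₃ _ (hgm z hz)).differentiableAt.hasDerivAt (gd z hz i j)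
  have lC1 : ∀ z ∈ Ω, ∀ i j k : ℂ, k = i * p z + j * q z →
      HasLineDerivAt ℂ C1 (k • C2 z) z (i, j) := fun z hz i j k hk => by
    subst hk
    exact LDcomp (ha₃ _ (hgm z hz)).deriv.differentiableAt.hasDerivAt (gd z hz i j)
  have lV3 : ∀ z ∈ Ω, ∀ i j k : ℂ, k = i * p z + j * q z →
      HasLineDerivAt ℂ (fun x => v₃ (g x)) (k • deriv v₃ (g z)) z (i, j) := fun z hz i j k hk => by
    subst hk
    exact LDcomp (hv₃ _ (hgm z hz)).differentiableAt.hasDerivAt (gd z hz i j)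
  -- derivatives of the coefficients
  have VA := fun z (hz : z ∈ Ω) i j k (hk : k = i * p z + j * q z) =>
    vertexLD A B C A1 z (i, j) i j k _ _ _ _ _ _ _ _ _ _ _ (lA z hz i j) (lB z hz i j)
      (lC z hz i j k hk) (lA1 z hz i j) (eA z hz) (eB z hz) (eC z hz) (eA2 z hz) (DA z hz)
  have VB := fun z (hz : z ∈ Ω) i j k (hk : k = i * p z + j * q z) =>
    vertexLD B C A B1 z (i, j) j k i _ _ _ _ _ _ _ _ _ _ _ (lB z hz i j) (lC z hz i j k hk)
      (lA z hz i j) (lB1 z hz i j) (eB z hz) (eC z hz) (eA z hz) (eB2 z hz) (DB z hz)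
  have VC := fun z (hz : z ∈ Ω) i j k (hk : k = i * p z + j * q z) =>
    vertexLD C A B C1 z (i, j) k i j _ _ _ _ _ _ _ _ _ _ _ (lC z hz i j k hk) (lA z hz i j)
      (lB z hz i j) (lC1 z hz i j k hk) (eC z hz) (eA z hz) (eB z hz) (eC2 z hz) (DC z hz)
  -- field relations
  have hq : ∀ z ∈ Ω, q z * (f z * b z ^ 2) = c z * a z ^ 2 := by
    intro z hz
    have hk : q z = 0 * p z + 1 * q z := by ring
    have := field_relLD A B C A1 (fun x => v₁ x.1) z (0, 1) 1 (q z) (a z) (b z) (c z) (d z) (e z)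
      (f z) (B1 z) (C1 z) (by simpa using lA z hz 0 1) (lB z hz 0 1) (lC z hz 0 1 _ hk)
      (by simpa using lA1 z hz 0 1) (by simpa using lV1 z hz 0 1) (eA z hz) (eB z hz) (eC z hz)
      (DA z hz) (nv1 _ (m1 z hz)) (sA z hz).1 (sA z hz).2.1
      (Filter.mem_of_superset (hΩo.mem_nhds hz) fun x hx => (sA x hx).2.2)
    linear_combination -this
  have hp : ∀ z ∈ Ω, p z * (e z * c z ^ 2) = b z * d z ^ 2 := by
    intro z hz
    have hk : p z = 1 * p z + 0 * q z := by ring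
    have := field_relLD B C A B1 (fun x => v₂ x.2) z (1, 0) (p z) 1 (c z) (d z) (e z) (f z)
      (a z) (b z) (C1 z) (A1 z) (by simpa using lB z hz 1 0) (lC z hz 1 0 _ hk) (lA z hz 1 0)
      (by simpa using lB1 z hz 1 0) (by simpa using lV2 z hz 1 0) (eB z hz) (eC z hz) (eA z hz)
      (DB z hz) (nv2 _ (m2 z hz)) (sB z hz).1 (sB z hz).2.1
      (Filter.mem_of_superset (hΩo.mem_nhds hz) fun x hx => (sB x hx).2.2)
    linear_combination this
  have hpq : ∀ z ∈ Ω, q z * (a z * e z ^ 2) = - p z * (d z * f z ^ 2) := by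
    intro z hz
    have hk : (0 : ℂ) = q z * p z + (- p z) * q z := by ring
    exact field_relLD C A B C1 (fun x => v₃ (g x)) z (q z, - p z) (q z) (- p z) (e z) (f z)
      (a z) (b z) (c z) (d z) (A1 z) (B1 z) (by simpa using lC z hz _ _ _ hk) (lA z hz _ _)
      (lB z hz _ _) (by simpa using lC1 z hz _ _ _ hk) (by simpa using lV3 z hz _ _ _ hk)
      (eC z hz) (eA z hz) (eB z hz)
      (DC z hz) (nv3 _ (hgm z hz)) (sC z hz).1 (sC z hz).2.1
      (Filter.mem_of_superset (hΩo.mem_nhds hz) fun x hx => (sC x hx).2.2)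
  have crc : ∀ (x y x' y' : ℂ) (u w : ℂ × ℂ),
      cr (x • u + y • w) (x' • u + y' • w) = (x * y' - y * x') * cr u w := by
    intro x y x' y' u w
    simp only [cr, Prod.fst_add, Prod.snd_add, Prod.smul_fst, Prod.smul_snd, smul_eq_mul]; ring
  have flat := sys_flat Ω hΩo a b c d e f (fun z => cr (B z - A z) (C z - A z))
    (fun z => cr (A1 z) (A2 z)) p q ka kb kc kd ke kf
    (fun z hz => (sA z hz).1) (fun z hz => (sA z hz).2.1) (fun z hz => (sB z hz).1)
    (fun z hz => (sB z hz).2.1) (fun z hz => (sC z hz).1) (fun z hz => (sC z hz).2.1) DA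
    (fun z hz i j k hk => (VA z hz i j k hk).1) (fun z hz i j k hk => (VA z hz i j k hk).2.1)
    (fun z hz i j k hk => (VB z hz i j k hk).1) (fun z hz i j k hk => (VB z hz i j k hk).2.1)
    (fun z hz i j k hk => (VC z hz i j k hk).1) (fun z hz i j k hk => (VC z hz i j k hk).2.1)
    (fun z hz => by
      have := (VA z hz 0 1 (q z) (by ring)).2.2
      refine HasDerivAt.congr_deriv (show HasDerivAt _ _ _ from this) ?_
      ring)
    (fun z hz => by
      show cr (A1 z) (A2 z) = _
      rw [eA z hz, eA2 z hz, crc])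
    (fun z hz => by
      have : (fun t : ℂ => cr (A1 (z + t • (0, 1))) (A2 (z + t • (0, 1)))) =
          fun _ => cr (A1 z) (A2 z) := by
        funext t; simp [A1, A2]
      show HasDerivAt (fun t : ℂ => cr (A1 (z + t • (0, 1))) (A2 (z + t • (0, 1)))) 0 0
      rw [this]; exact hasDerivAt_const _ _)
    hp hq hpq (fun z hz => sym_mixed (gs z hz))
  have w1 : ∀ z ∈ Ω, cr (A1 z) (A2 z) = 0 := fun z hz => by
    rw [eA z hz, eA2 z hz, crc, (flat z hz).2.1]; ring
  have w2 : ∀ z ∈ Ω, cr (B1 z) (B2 z) = 0 := fun z hz => by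
    rw [eB z hz, eB2 z hz, crc, (flat z hz).2.2.1]; ring
  have w3 : ∀ z ∈ Ω, cr (C1 z) (C2 z) = 0 := fun z hz => by
    rw [eC z hz, eC2 z hz, crc, (flat z hz).2.2.2]; ring
  -- base point and reparametrisations
  obtain ⟨z, hz⟩ := hΩne
  have t1 : ∀ᶠ y in nhds z.1, (y, z.2) ∈ Ω := by
    have : ContinuousAt (fun y : ℂ => (y, z.2)) z.1 := by fun_prop
    exact this.eventually (hΩo.mem_nhds hz)
  have t2 : ∀ᶠ y in nhds z.2, (z.1, y) ∈ Ω := by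
    have : ContinuousAt (fun y : ℂ => (z.1, y)) z.2 := by fun_prop
    exact this.eventually (hΩo.mem_nhds hz)
  have φ3 : HasDerivAt (fun y => g (z.1, y)) (q z) z.2 := by
    have h1 : HasFDerivAt g (fderiv ℂ g z) (z.1, z.2) :=
      ((gs z hz).differentiableAt (by norm_num)).hasFDerivAt
    have h2 : HasDerivAt (fun y : ℂ => (z.1, y)) ((0 : ℂ), (1 : ℂ)) z.2 :=
      (hasDerivAt_const _ _).prodMk (hasDerivAt_id _)
    exact h1.comp_hasDerivAt z.2 h2
  have q0 : q z ≠ 0 := by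
    intro h
    have := hq z hz
    rw [h, zero_mul] at this
    exact mul_ne_zero (sB z hz).1 (pow_ne_zero 2 (sA z hz).1) this.symm
  have anW : ∀ {a : ℂ → ℂ × ℂ} {U : Set ℂ}, IsOpen U → AnalyticOnNhd ℂ a U →
      AnalyticOnNhd ℂ (fun s => cr (deriv a s) (deriv (deriv a) s)) U := by
    intro a U hU ha
    refine DifferentiableOn.analyticOnNhd (fun t ht => ?_) hU
    exact (hda_cr (ha t ht).deriv.differentiableAt.hasDerivAt
      (ha t ht).deriv.deriv.differentiableAt.hasDerivAt).differentiableAt.differentiableWithinAt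
  have W1 := ident (φ := id) (anW hU₁o ha₁) hU₁c.isPreconnected (hasDerivAt_id z.1) one_ne_zero
    (m1 z hz) (t1.mono fun y hy => w1 _ hy)
  have W2 := ident (φ := id) (anW hU₂o ha₂) hU₂c.isPreconnected (hasDerivAt_id z.2) one_ne_zero
    (m2 z hz) (t2.mono fun y hy => w2 _ hy)
  have W3 := ident (anW hU₃o ha₃) hU₃c.isPreconnected φ3 q0
    (hgm z hz) (t2.mono fun y hy => w3 _ hy)
  have L1 := line_of_flat hU₁o hU₁c.isPreconnected ha₁ ha₁' W1 z.1 (m1 z hz)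
  have L2 := line_of_flat hU₂o hU₂c.isPreconnected ha₂ ha₂' W2 z.2 (m2 z hz)
  have L3 := line_of_flat hU₃o hU₃c.isPreconnected ha₃ ha₃' W3 (g z) (hgm z hz)
  have n1 := ha₁' _ (m1 z hz)
  have n2 := ha₂' _ (m2 z hz)
  have n3 := ha₃' _ (hgm z hz)
  -- the triangle
  obtain ⟨P, hP⟩ : ∃ P, P = pt (a z) (b z) (e z) (f z) (A z) (B z) (C z) := ⟨_, rfl⟩
  obtain ⟨Q, hQ⟩ : ∃ Q, Q = pt (c z) (d z) (a z) (b z) (B z) (C z) (A z) := ⟨_, rfl⟩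
  obtain ⟨R, hR⟩ : ∃ R, R = pt (e z) (f z) (c z) (d z) (C z) (A z) (B z) := ⟨_, rfl⟩
  have hdet : det3 P Q R ≠ 0 := by
    rw [hP, hQ, hR, det_pt, (flat z hz).1]
    refine mul_ne_zero (pow_ne_zero 2 ?_) (DA z hz)
    have : (-2 : ℂ) * (b z * d z * f z) ≠ 0 := mul_ne_zero (by norm_num)
      (mul_ne_zero (mul_ne_zero (sA z hz).2.1 (sB z hz).2.1) (sC z hz).2.1)
    intro h; apply this; linear_combination h
  have hdet' : det3 Q R P ≠ 0 := by
    have : det3 Q R P = det3 P Q R := by simp only [det3]; ring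
    rwa [this]
  have hdet'' : det3 R P Q ≠ 0 := by
    have : det3 R P Q = det3 P Q R := by simp only [det3]; ring
    rwa [this]
  -- the vertices lie on the (extended) lines at every point of `Ω`
  have PA : ∀ x ∈ Ω, cr (dirTo P (A x)) (A1 x) = 0 := fun x hx => by
    refine trans_line (X0 := A z) (X1 := A1 z) ?_ n1 (L1 _ (m1 x hx)).1 (L1 _ (m1 x hx)).2
    rw [hP, eA z hz]; exact on_right _ _ _ _ _ _ _
  have PC : ∀ x ∈ Ω, cr (dirTo P (C x)) (C1 x) = 0 := fun x hx => by
    refine trans_line (X0 := C z) (X1 := C1 z) ?_ n3 (L3 _ (hgm x hx)).1 (L3 _ (hgm x hx)).2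
    rw [hP, eC z hz]; exact on_left _ _ _ _ _ _ _
  have QB : ∀ x ∈ Ω, cr (dirTo Q (B x)) (B1 x) = 0 := fun x hx => by
    refine trans_line (X0 := B z) (X1 := B1 z) ?_ n2 (L2 _ (m2 x hx)).1 (L2 _ (m2 x hx)).2
    rw [hQ, eB z hz]; exact on_right _ _ _ _ _ _ _
  have QA : ∀ x ∈ Ω, cr (dirTo Q (A x)) (A1 x) = 0 := fun x hx => by
    refine trans_line (X0 := A z) (X1 := A1 z) ?_ n1 (L1 _ (m1 x hx)).1 (L1 _ (m1 x hx)).2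
    rw [hQ, eA z hz]; exact on_left _ _ _ _ _ _ _
  have RC : ∀ x ∈ Ω, cr (dirTo R (C x)) (C1 x) = 0 := fun x hx => by
    refine trans_line (X0 := C z) (X1 := C1 z) ?_ n3 (L3 _ (hgm x hx)).1 (L3 _ (hgm x hx)).2
    rw [hR, eC z hz]; exact on_right _ _ _ _ _ _ _
  have RB : ∀ x ∈ Ω, cr (dirTo R (B x)) (B1 x) = 0 := fun x hx => by
    refine trans_line (X0 := B z) (X1 := B1 z) ?_ n2 (L2 _ (m2 x hx)).1 (L2 _ (m2 x hx)).2
    rw [hR, eB z hz]; exact on_left _ _ _ _ _ _ _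
  refine ⟨P, Q, R, linInd_of_det hdet, ?_, ?_, ?_⟩
  · refine curve_concl hU₁o hU₁c.isPreconnected ha₁ hv₁ ha₁' hv₁t hdet ?_ (φ := id)
      (hasDerivAt_id z.1) one_ne_zero (m1 z hz) (t1.mono fun y hy => ?_)
    · intro s hs
      obtain ⟨σ, hσ⟩ := par n1 (L1 s hs).2
      rw [hP, hQ]
      exact side_pt _ _ _ _ _ _ σ _ _ _ _ (by rw [← eA z hz]; exact hσ)
    · exact field_through _ _ _ _ _ _ R _ _ _ _ _ _ _ (sA _ hy).1 (sB _ hy).2.1 (sC _ hy).2.1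
        (eA _ hy) (eB _ hy) (eC _ hy) (DA _ hy) (sA _ hy).2.2 (flat _ hy).1 (RB _ hy) (RC _ hy)
  · refine curve_concl hU₂o hU₂c.isPreconnected ha₂ hv₂ ha₂' hv₂t hdet' ?_ (φ := id)
      (hasDerivAt_id z.2) one_ne_zero (m2 z hz) (t2.mono fun y hy => ?_)
    · intro s hs
      obtain ⟨σ, hσ⟩ := par n2 (L2 s hs).2
      rw [hQ, hR]
      exact side_pt _ _ _ _ _ _ σ _ _ _ _ (by rw [← eB z hz]; exact hσ)
    · exact field_through _ _ _ _ _ _ P _ _ _ _ _ _ _ (sB _ hy).1 (sC _ hy).2.1 (sA _ hy).2.1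
        (eB _ hy) (eC _ hy) (eA _ hy) (DB _ hy) (sB _ hy).2.2
        (by linear_combination (flat _ hy).1) (PC _ hy) (PA _ hy)
  · refine curve_concl hU₃o hU₃c.isPreconnected ha₃ hv₃ ha₃' hv₃t hdet'' ?_
      φ3 q0 (hgm z hz) (t2.mono fun y hy => ?_)
    · intro s hs
      obtain ⟨σ, hσ⟩ := par n3 (L3 s hs).2
      rw [hR, hP]
      exact side_pt _ _ _ _ _ _ σ _ _ _ _ (by rw [← eC z hz]; exact hσ)
    · exact field_through _ _ _ _ _ _ Q _ _ _ _ _ _ _ (sC _ hy).1 (sA _ hy).2.1 (sB _ hy).2.1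
        (eC _ hy) (eA _ hy) (eB _ hy) (DC _ hy) (sC _ hy).2.2
        (by linear_combination (flat _ hy).1) (QA _ hy) (QB _ hy)
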